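/- The number of tuples of transpositions (τ₁,...,τ_{m+k-2}) in S_m such that τ_{m+k-2}···τ₁ equals a fixed permutation with cycle type (m₁,...,m_k) (a partition of m into k parts) and the group generated by the τ_i together with the fixed permutation acts transitively on {1,...,m}, divided by the number of relabelings, gives the Hurwitz number m^{k-3}·(m+k-2)!·m₁^{m₁}···m_k^{m_k}/(m₁!···m_k!·s(m₁,...,m_k)), where s(m₁,...,m_k) is the number of symmetries of the multiset {m₁,...,m_k}, valid for m ≥ 3. -/

import Mathlib

open scoped BigOperators

/-!
Count factorizations not only of a permutation of the whole set but of `σ` restricted to any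
`σ`-invariant set `A`, and replace transpositions by ordered pairs of distinct points, which
multiplies the number of factorizations of length `n` by `2 ^ n`.

Remove the first transposition `(a b)` of a connected factorization. The remaining ones factor
`(a b) σ`, and either they are still connected on `A`, or `A` splits into two pieces separating `a`
from `b`, each of which carries a connected factorization. If `a` and `b` lie on different cycles of
`σ`, these cycles are joined in `(a b) σ`, so there is no splitting; if they lie on one cycle, it is
cut in two and, in minimal length, the Riemann–Hurwitz inequality excludes connectedness and fixes
the lengths of the two factorizations of a splitting. This is the genus-zero cut-and-join
recursion.

The proposed formula satisfies the same recursion: after normalization, this is a combination of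
the Abel and Hurwitz generalizations of the binomial theorem.
-/

namespace HurwitzNumber

open Finset

section AbelHurwitz

variable {ι : Type*}

lemma sum_powerset_neg_one_pow_mul_add_sum_pow_eq_zero {R : Type*} [CommRing R] (a : ι → R)
    {V : Finset ι} {d : ℕ} (x : R) (hd : d < #V) :
    ∑ S ∈ V.powerset, (-1) ^ #S * (x + ∑ i ∈ S, a i) ^ d = 0 := by
  classical
  induction V using Finset.induction_on generalizing d with
  | empty => simp at hd
  | insert l V hl ih =>
    rw [card_insert_of_notMem hl] at hd
    have expand (S) (hS : S ∈ V.powerset) :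
        (-1) ^ #(insert l S) * (x + ∑ i ∈ insert l S, a i) ^ d =
          -∑ e ∈ range (d + 1), a l ^ (d - e) * (d.choose e : R) *
            ((-1) ^ #S * (x + ∑ i ∈ S, a i) ^ e) := by
      have hlS : l ∉ S := fun h => hl (mem_powerset.1 hS h)
      rw [card_insert_of_notMem hlS, sum_insert hlS, add_left_comm, add_comm (a l), add_pow,
        mul_sum, ← sum_neg_distrib]
      exact sum_congr rfl fun e _ => by ring
    have lower (e) (he : e ∈ range d) : ∑ S ∈ V.powerset, a l ^ (d - e) * (d.choose e : R) *
        ((-1) ^ #S * (x + ∑ i ∈ S, a i) ^ e) = 0 := by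
      rw [← mul_sum, ih (by have := mem_range.1 he; omega), mul_zero]
    rw [sum_powerset_insert hl, sum_congr rfl expand, sum_neg_distrib, sum_comm, sum_range_succ,
      sum_eq_zero lower]
    simp

lemma add_sum_ne_zero {K : Type*} [AddCommMonoid K] [PartialOrder K] [IsOrderedCancelAddMonoid K]
    {a : ι → K} {x : K} (ha : ∀ i, 0 ≤ a i) (hx : 0 < x) (S : Finset ι) :
    x + ∑ i ∈ S, a i ≠ 0 :=
  (add_pos_of_pos_of_nonneg hx (sum_nonneg fun i _ => ha i)).ne'

variable [DecidableEq ι]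

lemma sum_powerset_sum_sdiff {M : Type*} [AddCommMonoid M] (J : Finset ι)
    (h : Finset ι → ι → M) :
    ∑ S ∈ J.powerset, ∑ l ∈ J \ S, h S l = ∑ l ∈ J, ∑ S ∈ (J.erase l).powerset, h S l := by
  refine sum_comm' fun S l => ?_
  simp only [mem_powerset, mem_sdiff, subset_erase]
  tauto

lemma sum_powerset_mul_sub_pow {R : Type*} [CommRing R] (J : Finset ι) (g w : Finset ι → R)
    (M : R) :
    ∑ S ∈ J.powerset, g S * (M - w S) ^ #(J \ S) =
      ∑ V ∈ J.powerset, M ^ #(J \ V) *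
        ∑ S ∈ V.powerset, (-1) ^ #(V \ S) * (g S * w S ^ #(V \ S)) := by
  have expand (S) (hS : S ∈ J.powerset) : g S * (M - w S) ^ #(J \ S) =
      ∑ V ∈ Icc S J, M ^ #(J \ V) * ((-1) ^ #(V \ S) * (g S * w S ^ #(V \ S))) := by
    have disj {U} (hU : U ∈ (J \ S).powerset) : Disjoint S U :=
      disjoint_of_subset_right (mem_powerset.1 hU) disjoint_sdiff
    rw [Icc_eq_image_powerset (mem_powerset.1 hS), sum_image, sub_eq_neg_add,
      ← sum_pow_mul_eq_add_pow, mul_sum]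
    · refine sum_congr rfl fun U hU => ?_
      rw [union_sdiff_cancel_left (disj hU), ← sup_eq_union, ← sdiff_sdiff_left,
        card_sdiff_of_subset (mem_powerset.1 hU), neg_pow]
      ring
    · intro U hU U' hU' h
      rw [← union_sdiff_cancel_left (disj hU), ← union_sdiff_cancel_left (disj hU')]
      exact congrArg (· \ S) h
  simp_rw [mul_sum]
  rw [sum_congr rfl expand]
  refine sum_comm' fun S V => ?_
  simp only [mem_powerset, mem_Icc]
  exact ⟨fun h => h.2, fun h => ⟨h.1.trans h.2, h⟩⟩

variable {K : Type*} [Field K] {a : ι → K} {x y : K}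

lemma mul_add_sum_zpow (T : Finset ι) (c : ℤ) (h : y + ∑ i ∈ T, a i ≠ 0) :
    y * (y + ∑ i ∈ T, a i) ^ ((#T : ℤ) - (c + 1)) = (y + ∑ i ∈ T, a i) ^ ((#T : ℤ) - c) -
      ∑ l ∈ T, a l * (y + a l + ∑ i ∈ T.erase l, a i) ^ ((#(T.erase l) : ℤ) - c) := by
  have erase (l) (hl : l ∈ T) :
      a l * (y + a l + ∑ i ∈ T.erase l, a i) ^ ((#(T.erase l) : ℤ) - c) =
        a l * (y + ∑ i ∈ T, a i) ^ ((#T : ℤ) - (c + 1)) := by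
    rw [add_assoc, add_sum_erase T a hl, cast_card_erase_of_mem hl, sub_sub, add_comm 1]
  have hexp : (#T : ℤ) - c = (#T : ℤ) - (c + 1) + 1 := by ring
  rw [sum_congr rfl erase, ← sum_mul, hexp, zpow_add_one₀ h]
  ring

lemma mul_sum_powerset_mul_zpow (g : Finset ι → K) (J : Finset ι) (c : ℤ)
    (h : ∀ S, y + ∑ i ∈ S, a i ≠ 0) :
    y * ∑ S ∈ J.powerset, g S * (y + ∑ i ∈ J \ S, a i) ^ ((#(J \ S) : ℤ) - (c + 1)) =
      ∑ S ∈ J.powerset, g S * (y + ∑ i ∈ J \ S, a i) ^ ((#(J \ S) : ℤ) - c) -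
        ∑ l ∈ J, a l * ∑ S ∈ (J.erase l).powerset,
          g S * (y + a l + ∑ i ∈ J.erase l \ S, a i) ^ ((#(J.erase l \ S) : ℤ) - c) := by
  simp_rw [mul_sum, mul_left_comm _ (g _), mul_add_sum_zpow _ c (h _), mul_sub, mul_sum]
  rw [sum_sub_distrib, sum_powerset_sum_sdiff]
  simp_rw [erase_sdiff_comm]

variable [LinearOrder K] [IsStrictOrderedRing K]

lemma abel_hurwitz (ha : ∀ i, 0 ≤ a i) (J : Finset ι) (y : K) (hx : 0 < x) :
    ∑ S ∈ J.powerset, x * (x + ∑ i ∈ S, a i) ^ ((#S : ℤ) - 1) *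
      (y + ∑ i ∈ J \ S, a i) ^ #(J \ S) = (x + y + ∑ i ∈ J, a i) ^ #J := by
  have complement (S) (hS : S ∈ J.powerset) :
      y + ∑ i ∈ J \ S, a i = x + y + ∑ i ∈ J, a i - (x + ∑ i ∈ S, a i) := by
    rw [← sum_sdiff (mem_powerset.1 hS)]
    ring
  rw [sum_congr rfl fun S hS => by rw [complement S hS], sum_powerset_mul_sub_pow,
    sum_eq_single_of_mem ∅ (empty_mem_powerset J)]
  · simp [hx.ne']
  intro V _ hV
  have hcard : 0 < #V := card_pos.2 (nonempty_iff_ne_empty.2 hV)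
  have collect (S) (hS : S ∈ V.powerset) : (-1) ^ #(V \ S) *
      (x * (x + ∑ i ∈ S, a i) ^ ((#S : ℤ) - 1) * (x + ∑ i ∈ S, a i) ^ #(V \ S)) =
        x * (-1) ^ #V * ((-1) ^ #S * (x + ∑ i ∈ S, a i) ^ (#V - 1)) := by
    have hSV : #(V \ S) + #S = #V := card_sdiff_add_card_eq_card (mem_powerset.1 hS)
    have hsign : (-1 : K) ^ #(V \ S) = (-1) ^ #V * (-1) ^ #S := by
      rw [← hSV, pow_add, mul_assoc, ← mul_pow]
      simp
    have hexp : ((#V - 1 : ℕ) : ℤ) = ((#S : ℤ) - 1) + #(V \ S) := by omega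
    rw [← zpow_natCast _ (#V - 1), hexp, zpow_add₀ (add_sum_ne_zero ha hx S), zpow_natCast, hsign]
    ring
  rw [sum_congr rfl collect, ← mul_sum,
    sum_powerset_neg_one_pow_mul_add_sum_pow_eq_zero _ _ (by omega), mul_zero, mul_zero]

lemma abel_hurwitz_symm (ha : ∀ i, 0 ≤ a i) (J : Finset ι) (hx : 0 < x) (hy : 0 < y) :
    y * ∑ S ∈ J.powerset, x * (x + ∑ i ∈ S, a i) ^ ((#S : ℤ) - 1) *
      (y + ∑ i ∈ J \ S, a i) ^ ((#(J \ S) : ℤ) - 1) =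
      (x + y) * (x + y + ∑ i ∈ J, a i) ^ ((#J : ℤ) - 1) := by
  have h := mul_sum_powerset_mul_zpow
    (fun S => x * (x + ∑ i ∈ S, a i) ^ ((#S : ℤ) - 1)) J 0 (add_sum_ne_zero ha hy)
  have hxy := mul_add_sum_zpow J 0 (add_sum_ne_zero ha (add_pos hx hy) J)
  simp_rw [sub_zero, zpow_natCast, abel_hurwitz ha _ _ hx, ← add_assoc] at h hxy
  simpa only [zero_add] using h.trans hxy.symm

lemma abel_hurwitz_sub_two (ha : ∀ i, 0 ≤ a i) (J : Finset ι) (hx : 0 < x) (hy : 0 < y) :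
    y * ∑ S ∈ J.powerset, x * (x + ∑ i ∈ S, a i) ^ ((#S : ℤ) - 1) *
      (y + ∑ i ∈ J \ S, a i) ^ ((#(J \ S) : ℤ) - 2) =
      (x + y) / y * (x + y + ∑ i ∈ J, a i) ^ ((#J : ℤ) - 1) -
      (∑ l ∈ J, a l * (x + y + a l) / (y + a l)) * (x + y + ∑ i ∈ J, a i) ^ ((#J : ℤ) - 2) := by
  have symm {J : Finset ι} {z : K} (hz : 0 < z) := eq_div_of_mul_eq hz.ne'
    ((mul_comm _ z).trans (abel_hurwitz_symm ha J hx hz))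
  have erase (l) (hl : l ∈ J) : a l * ∑ S ∈ (J.erase l).powerset,
      x * (x + ∑ i ∈ S, a i) ^ ((#S : ℤ) - 1) *
        (y + a l + ∑ i ∈ J.erase l \ S, a i) ^ ((#(J.erase l \ S) : ℤ) - 1) =
      a l * (x + y + a l) / (y + a l) * (x + y + ∑ i ∈ J, a i) ^ ((#J : ℤ) - 2) := by
    have hexp : (#J : ℤ) - 1 - 1 = #J - 2 := by ring
    rw [symm (add_pos_of_pos_of_nonneg hy (ha l)), ← add_assoc, add_assoc (x + y),
      add_sum_erase J a hl, cast_card_erase_of_mem hl, hexp]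
    ring
  have h := mul_sum_powerset_mul_zpow
    (fun S => x * (x + ∑ i ∈ S, a i) ^ ((#S : ℤ) - 1)) J 1 (add_sum_ne_zero ha hy)
  rw [sum_congr rfl erase, symm hy, ← sum_mul, one_add_one_eq_two] at h
  rw [h]
  ring

lemma abel_hurwitz_sub_two_sub_two (ha : ∀ i, 0 ≤ a i) (J : Finset ι) (hx : 0 < x)
    (hy : 0 < y) :
    x * y * (x + y + ∑ i ∈ J, a i) * ∑ S ∈ J.powerset,
      (x + ∑ i ∈ S, a i) ^ ((#S : ℤ) - 2) * (y + ∑ i ∈ J \ S, a i) ^ ((#(J \ S) : ℤ) - 2) =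
      ((x + y) / x + (x + y) / y) * (x + y + ∑ i ∈ J, a i) ^ ((#J : ℤ) - 1) -
      (∑ l ∈ J, a l * (x + y + a l) * (1 / (x + a l) + 1 / (y + a l))) *
        (x + y + ∑ i ∈ J, a i) ^ ((#J : ℤ) - 2) := by
  have split (S) (hS : S ∈ J.powerset) : x * y * (x + y + ∑ i ∈ J, a i) *
      ((x + ∑ i ∈ S, a i) ^ ((#S : ℤ) - 2) * (y + ∑ i ∈ J \ S, a i) ^ ((#(J \ S) : ℤ) - 2)) =
      y * (x * (x + ∑ i ∈ S, a i) ^ ((#S : ℤ) - 1) *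
        (y + ∑ i ∈ J \ S, a i) ^ ((#(J \ S) : ℤ) - 2)) +
      x * (y * (y + ∑ i ∈ J \ S, a i) ^ ((#(J \ S) : ℤ) - 1) *
        (x + ∑ i ∈ S, a i) ^ ((#S : ℤ) - 2)) := by
    have hexp (n : ℤ) : n - 1 = n - 2 + 1 := by ring
    rw [hexp, hexp #(J \ S), zpow_add_one₀ (add_sum_ne_zero ha hx S),
      zpow_add_one₀ (add_sum_ne_zero ha hy (J \ S)), ← sum_sdiff (mem_powerset.1 hS)]
    ring
  have reflect : ∑ S ∈ J.powerset, y * (y + ∑ i ∈ J \ S, a i) ^ ((#(J \ S) : ℤ) - 1) *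
      (x + ∑ i ∈ S, a i) ^ ((#S : ℤ) - 2) = ∑ S ∈ J.powerset,
        y * (y + ∑ i ∈ S, a i) ^ ((#S : ℤ) - 1) *
          (x + ∑ i ∈ J \ S, a i) ^ ((#(J \ S) : ℤ) - 2) :=
    sum_nbij' (J \ ·) (J \ ·) (by simp) (by simp)
      (fun S hS => Finset.sdiff_sdiff_eq_self (mem_powerset.1 hS))
      (fun S hS => Finset.sdiff_sdiff_eq_self (mem_powerset.1 hS))
      (fun S hS => by rw [Finset.sdiff_sdiff_eq_self (mem_powerset.1 hS)])
  rw [mul_sum, sum_congr rfl split, sum_add_distrib, ← mul_sum, ← mul_sum, reflect,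
    abel_hurwitz_sub_two ha J hx hy, abel_hurwitz_sub_two ha J hy hx, add_comm y x]
  simp_rw [mul_add, sum_add_distrib, mul_one_div]
  ring

end AbelHurwitz

section TreeCoeff

/-- The coefficient `n ^ n / n!` of `X ^ n` in the power series `1 / (1 - T)`, where
`T = X * exp T` is the tree function (with the convention `0 ^ 0 = 1`). -/
def treeCoeff (n : ℕ) : ℚ := (n : ℚ) ^ n / n.factorial

lemma treeCoeff_zero : treeCoeff 0 = 1 := by simp [treeCoeff]

lemma treeCoeff_pos (n : ℕ) : 0 < treeCoeff n := by
  rcases n.eq_zero_or_pos with rfl | hn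
  · simp [treeCoeff]
  · unfold treeCoeff
    positivity

lemma treeCoeff_mul_treeCoeff_sub {n i : ℕ} (hi : i ≤ n) :
    treeCoeff i * treeCoeff (n - i) =
      (n.choose i * ((i : ℚ) ^ i * ((n - i : ℕ) : ℚ) ^ (n - i))) / n.factorial := by
  rw [treeCoeff, treeCoeff, Nat.cast_choose ℚ hi]
  have := Nat.factorial_ne_zero n
  field_simp

lemma sum_powerset_card_card_sdiff {ι M : Type*} [DecidableEq ι] [AddCommMonoid M] (V : Finset ι)
    (f : ℕ → ℕ → M) :
    ∑ S ∈ V.powerset, f #S #(V \ S) = ∑ i ∈ range (#V + 1), (#V).choose i • f i (#V - i) := by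
  rw [← sum_powerset_apply_card fun i => f i (#V - i)]
  exact sum_congr rfl fun S hS => by rw [card_sdiff_of_subset (mem_powerset.1 hS)]

lemma sum_choose_mul_sub_pow {R : Type*} [CommRing R] (n : ℕ) (g w : ℕ → R) (M : R) :
    ∑ i ∈ range (n + 1), n.choose i * (g i * (M - w i) ^ (n - i)) =
      ∑ q ∈ range (n + 1), n.choose q * (M ^ (n - q) *
        ∑ i ∈ range (q + 1), q.choose i * ((-1) ^ (q - i) * (g i * w i ^ (q - i)))) := by
  have h := sum_powerset_mul_sub_pow (range n) (fun S => g #S) (fun S => w #S) M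
  rw [sum_powerset_card_card_sdiff _ fun i j => g i * (M - w i) ^ j,
    sum_congr rfl fun V _ => congrArg (M ^ #(range n \ V) * ·)
      (sum_powerset_card_card_sdiff V fun i j => (-1) ^ j * (g i * w i ^ j)),
    sum_powerset_card_card_sdiff _ fun q j => M ^ j * ∑ i ∈ range (q + 1),
      q.choose i • ((-1) ^ (q - i) * (g i * w i ^ (q - i))), card_range] at h
  simpa only [nsmul_eq_mul] using h

lemma sum_Ico_treeCoeff_mul_treeCoeff_div {n : ℕ} (hn : 1 ≤ n) :
    ∑ i ∈ Ico 1 n, treeCoeff i * treeCoeff (n - i) * (1 / (i : ℚ)) =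
      treeCoeff n * (1 - 1 / n) := by
  obtain ⟨n, rfl⟩ := Nat.exists_eq_add_of_le' hn
  have h := abel_hurwitz (a := fun _ : ℕ => (1 : ℚ)) (by simp) (range n) 0 one_pos
  simp only [sum_const, nsmul_eq_mul, mul_one, one_mul, zero_add, add_zero, card_range] at h
  rw [sum_powerset_card_card_sdiff _ fun i j => (1 + (i : ℚ)) ^ ((i : ℤ) - 1) * (j : ℚ) ^ j,
    card_range] at h
  have term (i) (hi : i ∈ range (n + 1)) :
      treeCoeff (i + 1) * treeCoeff (n - i) * (1 / ((i + 1 : ℕ) : ℚ)) =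
        n.choose i • ((1 + (i : ℚ)) ^ ((i : ℤ) - 1) * ((n - i : ℕ) : ℚ) ^ (n - i)) /
          n.factorial := by
    have hi' : (i : ℚ) + 1 ≠ 0 := by positivity
    have := Nat.factorial_ne_zero n
    rw [treeCoeff, treeCoeff, nsmul_eq_mul, Nat.cast_choose ℚ (mem_range_succ_iff.1 hi),
      Nat.factorial_succ, pow_succ, add_comm 1 (i : ℚ), zpow_sub_one₀ hi', zpow_natCast]
    push_cast
    field_simp
  have total : ∑ i ∈ range (n + 1),
      treeCoeff (i + 1) * treeCoeff (n - i) * (1 / ((i + 1 : ℕ) : ℚ)) = treeCoeff (n + 1) := by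
    rw [sum_congr rfl term, ← sum_div, h, treeCoeff, Nat.factorial_succ, pow_succ]
    push_cast
    field_simp
    ring
  rw [sum_range_succ, Nat.sub_self, treeCoeff_zero, mul_one] at total
  rw [sum_Ico_eq_sum_range, Nat.add_sub_cancel]
  simp_rw [add_comm 1, Nat.add_sub_add_right]
  linear_combination total

section FiniteDifferences

variable {K : Type*} [Field K] [LinearOrder K] [IsStrictOrderedRing K] {y : K}

lemma fwdDiff_iter_inv (q : ℕ) (hy : 0 < y) :
    (fwdDiff 1)^[q] (fun x => x⁻¹) y =
      (-1) ^ q * q.factorial / (ascPochhammer K (q + 1)).eval y := by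
  induction q generalizing y with
  | zero => simp
  | succ q ih =>
    have shift : (ascPochhammer K (q + 1)).eval y * (y + (q + 1)) =
        y * (ascPochhammer K (q + 1)).eval (y + 1) := by
      have h := ascPochhammer_succ_eval (q + 1) y
      rw [ascPochhammer_succ_left] at h
      simpa using h.symm
    have hpos := ascPochhammer_pos (q + 1) y hy
    have hpos' := ascPochhammer_pos (q + 1) (y + 1) (by positivity)
    rw [Function.iterate_succ_apply', fwdDiff, ih hy, ih (by positivity),
      ascPochhammer_succ_eval (q + 1), Nat.factorial_succ, pow_succ]
    push_cast
    rw [div_sub_div _ _ hpos'.ne' hpos.ne', div_eq_div_iff (by positivity) (by positivity)]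
    linear_combination ((-1) ^ q * (q.factorial : K) *
      (ascPochhammer K (q + 1)).eval y) * shift

lemma sum_neg_one_pow_mul_choose_mul_pow_div_add {q e : ℕ} (he : e ≤ q) (hy : 0 < y) :
    ∑ i ∈ range (q + 1), (-1) ^ (q - i) * (q.choose i : K) * ((i : K) ^ e / (i + y)) =
      (-y) ^ e * ((-1) ^ q * q.factorial / (ascPochhammer K (q + 1)).eval y) := by
  induction e with
  | zero =>
    rw [← fwdDiff_iter_inv q hy, fwdDiff_iter_eq_sum_shift]
    simp [zsmul_eq_mul, add_comm]
  | succ e ih =>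
    have hlow : ∑ i ∈ range (q + 1), (-1) ^ (q - i) * (q.choose i : K) * (i : K) ^ e = 0 := by
      have h := congrFun (fwdDiff_iter_pow_eq_zero_of_lt (R := K) (Nat.lt_of_succ_le he)) 0
      simpa [fwdDiff_iter_eq_sum_shift, zsmul_eq_mul] using h
    rw [pow_succ', mul_assoc, ← ih (by omega), ← sub_eq_zero, ← hlow, mul_sum, ← sum_sub_distrib]
    refine sum_congr rfl fun i _ => ?_
    have : 0 < (i : K) + y := by positivity
    field_simp
    ring

end FiniteDifferences

lemma sum_treeCoeff_mul_treeCoeff_div_add (n : ℕ) {l : ℕ} (hl : 1 ≤ l) :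
    ∑ i ∈ range (n + 1), treeCoeff i * treeCoeff (n - i) * (l * treeCoeff l / ((i : ℚ) + l)) =
      ∑ q ∈ range (n + 1), (n : ℚ) ^ (n - q) * (l : ℚ) ^ (l + q) /
        ((n - q).factorial * (l + q).factorial) := by
  have hl' : (0 : ℚ) < l := by exact_mod_cast hl
  have h := sum_choose_mul_sub_pow n (fun i => (i : ℚ) ^ i / (i + l)) (fun i => (i : ℚ)) n
  have lhs (i) (hi : i ∈ range (n + 1)) :
      treeCoeff i * treeCoeff (n - i) * (l * treeCoeff l / ((i : ℚ) + l)) =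
        l * treeCoeff l / n.factorial *
          (n.choose i * ((i : ℚ) ^ i / (i + l) * ((n : ℚ) - i) ^ (n - i))) := by
    have hi' := mem_range_succ_iff.1 hi
    rw [treeCoeff_mul_treeCoeff_sub hi', Nat.cast_sub hi']
    ring
  have inner (q) : ∑ i ∈ range (q + 1), (q.choose i : ℚ) *
      ((-1) ^ (q - i) * ((i : ℚ) ^ i / (i + l) * (i : ℚ) ^ (q - i))) =
        (l : ℚ) ^ q * q.factorial / (l.ascFactorial (q + 1)) := by
    rw [← ascPochhammer_nat_eq_ascFactorial, ascPochhammer_eval_cast]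
    have hsign : (-(l : ℚ)) ^ q * (-1) ^ q = (l : ℚ) ^ q := by rw [← mul_pow]; simp
    rw [← hsign, mul_assoc, mul_div_assoc,
      ← sum_neg_one_pow_mul_choose_mul_pow_div_add le_rfl hl']
    refine sum_congr rfl fun i hi => ?_
    rw [← Nat.add_sub_of_le (mem_range_succ_iff.1 hi), pow_add]
    simp only [Nat.add_sub_cancel_left]
    ring
  rw [sum_congr rfl lhs, ← mul_sum, h, mul_sum]
  refine sum_congr rfl fun q hq => ?_
  have hasc : ((l - 1).factorial : ℚ) * l.ascFactorial (q + 1) = (l + q).factorial := by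
    exact_mod_cast Nat.factorial_mul_ascFactorial' l (q + 1) hl
  have hfac : (l.factorial : ℚ) = l * (l - 1).factorial := by
    exact_mod_cast (Nat.mul_factorial_pred (by omega)).symm
  have hpos : (l.ascFactorial (q + 1) : ℚ) ≠ 0 := by
    intro h0
    rw [h0, mul_zero] at hasc
    exact Nat.factorial_ne_zero _ (by exact_mod_cast hasc.symm)
  rw [inner, ← hasc, treeCoeff, hfac, Nat.cast_choose ℚ (mem_range_succ_iff.1 hq), pow_add]
  have := Nat.factorial_ne_zero n
  field_simp

lemma sum_add_sum_eq_treeCoeff_add (n l : ℕ) :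
    (∑ q ∈ range (n + 1), (n : ℚ) ^ (n - q) * (l : ℚ) ^ (l + q) /
        ((n - q).factorial * (l + q).factorial)) +
      (∑ q ∈ range (l + 1), (l : ℚ) ^ (l - q) * (n : ℚ) ^ (n + q) /
        ((l - q).factorial * (n + q).factorial)) =
      treeCoeff (n + l) + treeCoeff n * treeCoeff l := by
  have binomial : treeCoeff (n + l) = ∑ t ∈ range (l + (n + 1)),
      (l : ℚ) ^ t * (n : ℚ) ^ (n + l - t) / (t.factorial * (n + l - t).factorial) := by
    rw [treeCoeff, Nat.cast_add, add_comm (n : ℚ), add_pow, sum_div,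
      show l + (n + 1) = n + l + 1 by ring]
    refine sum_congr rfl fun t ht => ?_
    rw [Nat.cast_choose ℚ (mem_range_succ_iff.1 ht)]
    have := Nat.factorial_ne_zero (n + l)
    field_simp
  have lower : ∑ q ∈ range (l + 1), (l : ℚ) ^ (l - q) * (n : ℚ) ^ (n + q) /
      ((l - q).factorial * (n + q).factorial) =
        (∑ t ∈ range l, (l : ℚ) ^ t * (n : ℚ) ^ (n + l - t) /
          (t.factorial * (n + l - t).factorial)) + treeCoeff n * treeCoeff l := by
    rw [← sum_range_reflect, sum_range_succ]
    congr 1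
    · refine sum_congr rfl fun t ht => ?_
      have := mem_range.1 ht
      rw [show l - (l + 1 - 1 - t) = t by omega, show n + (l + 1 - 1 - t) = n + l - t by omega]
    · simp only [add_tsub_cancel_right, tsub_self, tsub_zero, add_zero, treeCoeff]
      ring
  have upper : ∑ q ∈ range (n + 1), (n : ℚ) ^ (n - q) * (l : ℚ) ^ (l + q) /
      ((n - q).factorial * (l + q).factorial) = ∑ q ∈ range (n + 1),
        (l : ℚ) ^ (l + q) * (n : ℚ) ^ (n + l - (l + q)) /
          ((l + q).factorial * (n + l - (l + q)).factorial) := by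
    refine sum_congr rfl fun q _ => ?_
    rw [show n + l - (l + q) = n - q by omega]
    ring
  rw [lower, upper, binomial, sum_range_add _ l (n + 1)]
  ring

/-- The interior part of the convolution of `treeCoeff` with itself, the `i`-th term being
weighted by `l / (i + l)`. -/
def treeConv (n l : ℕ) : ℚ :=
  ∑ i ∈ Ico 1 n, treeCoeff i * treeCoeff (n - i) * (l / ((i : ℚ) + l))

lemma treeCoeff_add {n l : ℕ} (hn : 1 ≤ n) (hl : 1 ≤ l) :
    treeCoeff (n + l) = 2 * treeCoeff n * treeCoeff l + treeCoeff l * treeConv n l +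
      treeCoeff n * treeConv l n := by
  have ends {n l : ℕ} (hn : 1 ≤ n) (hl : 1 ≤ l) : ∑ i ∈ range (n + 1),
      treeCoeff i * treeCoeff (n - i) * (l * treeCoeff l / ((i : ℚ) + l)) =
        treeCoeff n * treeCoeff l + treeCoeff l * treeConv n l +
          treeCoeff n * (l * treeCoeff l / (n + l)) := by
    have hl' : (l : ℚ) ≠ 0 := by positivity
    have interior : treeCoeff l * treeConv n l = ∑ i ∈ Ico 1 n,
        treeCoeff i * treeCoeff (n - i) * (l * treeCoeff l / ((i : ℚ) + l)) := by
      rw [treeConv, mul_sum]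
      exact sum_congr rfl fun i _ => by ring
    rw [sum_range_succ, range_eq_Ico, sum_eq_sum_Ico_succ_bot (by omega), interior, Nat.sub_zero,
      Nat.sub_self, treeCoeff_zero, Nat.cast_zero, zero_add]
    field_simp
  have h := sum_add_sum_eq_treeCoeff_add n l
  rw [← sum_treeCoeff_mul_treeCoeff_div_add n hl, ← sum_treeCoeff_mul_treeCoeff_div_add l hn,
    ends hn hl, ends hl hn] at h
  have hnl : (n : ℚ) + l ≠ 0 := by positivity
  have boundary : treeCoeff n * (l * treeCoeff l / (n + l)) +
      treeCoeff l * (n * treeCoeff n / (l + n)) = treeCoeff n * treeCoeff l := by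
    rw [add_comm (l : ℚ)]
    field_simp
    ring
  linear_combination -h + boundary

end TreeCoeff

section CutAndJoin

/-- The normalized genus-zero Hurwitz number of a cycle type `P`, given as the multiset of its
parts: `(∑ p) ^ (#P - 3) * ∏ p ^ (p + 1) / p!`. A permutation of cycle type `P` has
`2 ^ n * n! * hurwitzWeight P` minimal transitive factorizations into `n = ∑ p + #P - 2` ordered
pairs of distinct points. -/
def hurwitzWeight (P : Multiset ℕ) : ℚ :=
  (P.sum : ℚ) ^ ((P.card : ℤ) - 3) * (P.map fun p : ℕ => (p : ℚ) * treeCoeff p).prod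

variable {ι : Type*} (a : ι → ℕ)

lemma hurwitzWeight_map (S : Finset ι) :
    hurwitzWeight (S.val.map a) =
      (∑ i ∈ S, (a i : ℚ)) ^ ((#S : ℤ) - 3) * ∏ i ∈ S, (a i : ℚ) * treeCoeff (a i) := by
  simp [hurwitzWeight, Multiset.map_map]

lemma hurwitzWeight_cons_map (r : ℕ) (S : Finset ι) :
    hurwitzWeight (r ::ₘ S.val.map a) = ((r : ℚ) + ∑ i ∈ S, (a i : ℚ)) ^ ((#S : ℤ) - 2) *
      (r * treeCoeff r * ∏ i ∈ S, (a i : ℚ) * treeCoeff (a i)) := by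
  have hexp : (#S : ℤ) + 1 - 3 = #S - 2 := by ring
  simp [hurwitzWeight, Multiset.map_map, hexp]

lemma sum_Ico_treeCoeff_mul_abel_hurwitz (J : Finset ι) {d : ℕ} (hd : 1 ≤ d) (A B : ℚ) :
    ∑ r ∈ Ico 1 d, treeCoeff r * treeCoeff (d - r) *
      (((r + (d - r : ℕ) : ℚ) / r + (r + (d - r : ℕ) : ℚ) / (d - r : ℕ)) * A -
        (∑ l ∈ J, (a l : ℚ) * (r + (d - r : ℕ) + a l) *
          (1 / ((r : ℚ) + a l) + 1 / ((d - r : ℕ) + (a l : ℚ)))) * B) =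
      2 * ((d - 1) * treeCoeff d * A -
        (∑ l ∈ J, ((a l : ℚ) + d) * treeConv d (a l)) * B) := by
  set F : ℕ → ℚ := fun r => treeCoeff r * treeCoeff (d - r) *
    (d / r * A - (∑ l ∈ J, (a l : ℚ) * (d + a l) * (1 / ((r : ℚ) + a l))) * B) with hF
  have split (r) (hr : r ∈ Ico 1 d) : treeCoeff r * treeCoeff (d - r) *
      (((r + (d - r : ℕ) : ℚ) / r + (r + (d - r : ℕ) : ℚ) / (d - r : ℕ)) * A -
        (∑ l ∈ J, (a l : ℚ) * (r + (d - r : ℕ) + a l) *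
          (1 / ((r : ℚ) + a l) + 1 / ((d - r : ℕ) + (a l : ℚ)))) * B) = F r + F (d - r) := by
    have hrd : r ≤ d := (mem_Ico.1 hr).2.le
    have hsum : (r : ℚ) + (d - r : ℕ) = d := by push_cast [hrd]; ring
    simp only [hF, hsum, Nat.sub_sub_self hrd, mul_add, sum_add_distrib]
    ring
  have reflect : ∑ r ∈ Ico 1 d, F (d - r) = ∑ r ∈ Ico 1 d, F r :=
    sum_nbij' (d - ·) (d - ·) (by grind) (by grind) (by grind) (by grind) (by simp)
  have conv (l : ι) : ∑ r ∈ Ico 1 d, treeCoeff r * treeCoeff (d - r) *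
      ((a l : ℚ) * (d + a l) * (1 / ((r : ℚ) + a l))) = (a l + d) * treeConv d (a l) := by
    rw [treeConv, mul_sum]
    exact sum_congr rfl fun r _ => by ring
  have total : ∑ r ∈ Ico 1 d, F r = (d - 1) * treeCoeff d * A -
      (∑ l ∈ J, ((a l : ℚ) + d) * treeConv d (a l)) * B := by
    have hd' : (d : ℚ) ≠ 0 := by positivity
    have main : ∑ r ∈ Ico 1 d, treeCoeff r * treeCoeff (d - r) * (d / r) =
        (d - 1) * treeCoeff d := by
      simp_rw [← mul_one_div (d : ℚ), mul_left_comm _ (d : ℚ)]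
      rw [← mul_sum, sum_Ico_treeCoeff_mul_treeCoeff_div hd]
      field_simp
    rw [← main, sum_congr rfl fun l _ => (conv l).symm, sum_comm, sum_mul, sum_mul,
      ← sum_sub_distrib]
    refine sum_congr rfl fun r _ => ?_
    rw [← mul_sum]
    ring
  rw [sum_congr rfl split, sum_add_distrib, reflect, total]
  ring

variable [DecidableEq ι]

lemma sum_hurwitzWeight_cut (J : Finset ι) {d : ℕ} (hd : 1 ≤ d) :
    ((d : ℚ) + ∑ i ∈ J, (a i : ℚ)) * ∑ r ∈ Ico 1 d, ∑ S ∈ J.powerset,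
      hurwitzWeight (r ::ₘ S.val.map a) * hurwitzWeight ((d - r) ::ₘ (J \ S).val.map a) =
      2 * (∏ i ∈ J, (a i : ℚ) * treeCoeff (a i)) *
        ((d - 1) * treeCoeff d * ((d : ℚ) + ∑ i ∈ J, (a i : ℚ)) ^ ((#J : ℤ) - 1) -
          (∑ l ∈ J, ((a l : ℚ) + d) * treeConv d (a l)) *
            ((d : ℚ) + ∑ i ∈ J, (a i : ℚ)) ^ ((#J : ℤ) - 2)) := by
  set M := (d : ℚ) + ∑ i ∈ J, (a i : ℚ)
  have factor (r : ℕ) (S) (hS : S ∈ J.powerset) :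
      hurwitzWeight (r ::ₘ S.val.map a) * hurwitzWeight ((d - r) ::ₘ (J \ S).val.map a) =
        (∏ i ∈ J, (a i : ℚ) * treeCoeff (a i)) * (treeCoeff r * treeCoeff (d - r)) *
          (r * (d - r : ℕ) * (((r : ℚ) + ∑ i ∈ S, (a i : ℚ)) ^ ((#S : ℤ) - 2) *
            (((d - r : ℕ) : ℚ) + ∑ i ∈ J \ S, (a i : ℚ)) ^ ((#(J \ S) : ℤ) - 2))) := by
    rw [hurwitzWeight_cons_map, hurwitzWeight_cons_map, ← prod_sdiff (mem_powerset.1 hS)]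
    ring
  have abel (r) (hr : r ∈ Ico 1 d) := by
    have hr' := mem_Ico.1 hr
    have hx : (0 : ℚ) < r := by exact_mod_cast hr'.1
    have hy : (0 : ℚ) < (d - r : ℕ) := by exact_mod_cast Nat.sub_pos_of_lt hr'.2
    have hM : (r : ℚ) + (d - r : ℕ) + ∑ i ∈ J, (a i : ℚ) = M := by
      push_cast [M, hr'.2.le]
      ring
    have h := abel_hurwitz_sub_two_sub_two (fun i => (a i).cast_nonneg (α := ℚ)) J hx hy
    rw [hM] at h
    exact h
  rw [mul_sum, mul_assoc, mul_left_comm, ← sum_Ico_treeCoeff_mul_abel_hurwitz a J hd, mul_sum]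
  refine sum_congr rfl fun r hr => ?_
  rw [← abel r hr, sum_congr rfl (factor r), ← mul_sum, ← mul_sum]
  ring

lemma sum_sum_erase_comm (C : Finset ι) (h : ι → ι → ℚ) :
    ∑ i ∈ C, ∑ j ∈ C.erase i, h i j = ∑ i ∈ C, ∑ j ∈ C.erase i, h j i :=
  sum_comm' fun _ _ => by grind

lemma sum_sum_erase_add (C : Finset ι) (f : ι → ℚ) :
    ∑ i ∈ C, ∑ j ∈ C.erase i, (f i + f j) = 2 * (#C - 1) * ∑ i ∈ C, f i := by
  have inner (i) (hi : i ∈ C) : ∑ _ ∈ C.erase i, f i = (#C - 1) * f i := by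
    rw [sum_const, nsmul_eq_mul, cast_card_erase_of_mem hi]
  simp_rw [sum_add_distrib]
  rw [sum_sum_erase_comm C fun _ j => f j, sum_congr rfl inner, ← mul_sum]
  ring

variable {C : Finset ι}

lemma mul_hurwitzWeight_cut (ha : ∀ c ∈ C, 1 ≤ a c) {i : ι} (hi : i ∈ C) :
    (∑ c ∈ C, (a c : ℚ)) * (a i * ∑ r ∈ Ico 1 (a i), ∑ S ∈ (C.erase i).powerset,
      hurwitzWeight (r ::ₘ S.val.map a) *
        hurwitzWeight ((a i - r) ::ₘ (C.erase i \ S).val.map a)) =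
      2 * hurwitzWeight (C.val.map a) * ((a i - 1) * (∑ c ∈ C, (a c : ℚ)) -
        ∑ j ∈ C.erase i, ((a i : ℚ) + a j) * (treeConv (a i) (a j) / treeCoeff (a i))) := by
  have hM : (0 : ℚ) < ∑ c ∈ C, (a c : ℚ) :=
    sum_pos (fun c hc => by exact_mod_cast ha c hc) ⟨i, hi⟩
  have hcoeff := treeCoeff_pos (a i)
  have h := sum_hurwitzWeight_cut a (C.erase i) (ha i hi)
  have hexp₁ : (#C : ℤ) - 1 - 1 = #C - 3 + 1 := by ring
  have hexp₂ : (#C : ℤ) - 1 - 2 = #C - 3 := by ring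
  rw [add_sum_erase C (fun c => (a c : ℚ)) hi, cast_card_erase_of_mem hi, hexp₁, hexp₂,
    zpow_add_one₀ hM.ne'] at h
  rw [mul_left_comm, h, hurwitzWeight_map, ← mul_prod_erase C _ hi]
  simp_rw [add_comm (a i : ℚ), ← mul_div_assoc]
  rw [← sum_div]
  field_simp

lemma mul_hurwitzWeight_join (ha : ∀ c ∈ C, 1 ≤ a c) {i j : ι} (hi : i ∈ C) (hj : j ∈ C.erase i) :
    (∑ c ∈ C, (a c : ℚ)) *
      (a i * (a j * hurwitzWeight ((a i + a j) ::ₘ ((C.erase i).erase j).val.map a))) =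
      hurwitzWeight (C.val.map a) * ((a i + a j) * (2 + treeConv (a i) (a j) / treeCoeff (a i) +
        treeConv (a j) (a i) / treeCoeff (a j))) := by
  have hM : (0 : ℚ) < ∑ c ∈ C, (a c : ℚ) :=
    sum_pos (fun c hc => by exact_mod_cast ha c hc) ⟨i, hi⟩
  have hi' := treeCoeff_pos (a i)
  have hj' := treeCoeff_pos (a j)
  have hexp : (#C : ℤ) - 3 = #C - 1 - 1 - 2 + 1 := by ring
  rw [hurwitzWeight_cons_map, hurwitzWeight_map, cast_card_erase_of_mem hj,
    cast_card_erase_of_mem hi, Nat.cast_add, add_assoc (a i : ℚ),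
    add_sum_erase _ (fun c => (a c : ℚ)) hj, add_sum_erase C (fun c => (a c : ℚ)) hi,
    ← mul_prod_erase C _ hi, ← mul_prod_erase _ _ hj, hexp, zpow_add_one₀ hM.ne',
    treeCoeff_add (ha i hi) (ha j (mem_of_mem_erase hj))]
  field_simp

/-- The coefficient form of the genus-zero cut-and-join equation. -/
theorem hurwitzWeight_cut_and_join (ha : ∀ c ∈ C, 1 ≤ a c) (hC : C.Nonempty) :
    2 * (∑ c ∈ C, (a c : ℚ) + #C - 2) * hurwitzWeight (C.val.map a) =
      ∑ i ∈ C, (a i : ℚ) *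
        (∑ j ∈ C.erase i, a j * hurwitzWeight ((a i + a j) ::ₘ ((C.erase i).erase j).val.map a) +
          ∑ r ∈ Ico 1 (a i), ∑ S ∈ (C.erase i).powerset, hurwitzWeight (r ::ₘ S.val.map a) *
            hurwitzWeight ((a i - r) ::ₘ (C.erase i \ S).val.map a)) := by
  set M := ∑ c ∈ C, (a c : ℚ)
  set R : ι → ι → ℚ := fun i j => ((a i : ℚ) + a j) * (treeConv (a i) (a j) / treeCoeff (a i))
    with hR
  have hM : 0 < M := sum_pos (fun c hc => by exact_mod_cast ha c hc) hC
  have join : ∑ i ∈ C, M * (a i * ∑ j ∈ C.erase i,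
      a j * hurwitzWeight ((a i + a j) ::ₘ ((C.erase i).erase j).val.map a)) =
        hurwitzWeight (C.val.map a) * (4 * (#C - 1) * M + 2 * ∑ i ∈ C, ∑ j ∈ C.erase i, R i j) := by
    have pair (i j : ι) : ((a i : ℚ) + a j) * (2 + treeConv (a i) (a j) / treeCoeff (a i) +
        treeConv (a j) (a i) / treeCoeff (a j)) = 2 * ((a i : ℚ) + a j) + (R i j + R j i) := by
      simp only [hR]
      ring
    have inner (i) (hi : i ∈ C) : M * (a i * ∑ j ∈ C.erase i,
        a j * hurwitzWeight ((a i + a j) ::ₘ ((C.erase i).erase j).val.map a)) =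
          hurwitzWeight (C.val.map a) *
            ∑ j ∈ C.erase i, (2 * ((a i : ℚ) + a j) + (R i j + R j i)) := by
      simp_rw [mul_sum (C.erase i)]
      exact sum_congr rfl fun j hj => by rw [mul_hurwitzWeight_join a ha hi hj, pair]
    rw [sum_congr rfl inner, ← mul_sum]
    simp_rw [sum_add_distrib (f := fun j => 2 * ((a _ : ℚ) + a j)),
      sum_add_distrib (f := fun j => R _ j)]
    rw [sum_add_distrib, sum_add_distrib, sum_sum_erase_comm C fun i j => R j i]
    simp_rw [← mul_sum]
    rw [sum_sum_erase_add C fun c => (a c : ℚ)]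
    ring
  have cut : ∑ i ∈ C, M * (a i * ∑ r ∈ Ico 1 (a i), ∑ S ∈ (C.erase i).powerset,
      hurwitzWeight (r ::ₘ S.val.map a) *
        hurwitzWeight ((a i - r) ::ₘ (C.erase i \ S).val.map a)) =
        2 * hurwitzWeight (C.val.map a) * ((M - #C) * M - ∑ i ∈ C, ∑ j ∈ C.erase i, R i j) := by
    rw [sum_congr rfl fun i hi => mul_hurwitzWeight_cut a ha hi, ← mul_sum, sum_sub_distrib,
      ← sum_mul, sum_sub_distrib, sum_const, nsmul_one]
  apply mul_left_cancel₀ hM.ne'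
  simp_rw [mul_add]
  rw [sum_add_distrib, mul_add, mul_sum C, mul_sum C, join, cut]
  ring

end CutAndJoin

section WordSum

variable {γ κ R : Type*}

/-- The sum of `u` over all words of length `n` in the alphabet `Z`. -/
def wordSum [AddCommMonoid R] (Z : Finset γ) : ℕ → (List γ → R) → R
  | 0, u => u []
  | n + 1, u => ∑ x ∈ Z, wordSum Z n fun L => u (x :: L)

section AddCommMonoid

variable [AddCommMonoid R]

lemma wordSum_congr {Z : Finset γ} {n : ℕ} {u v : List γ → R}
    (h : ∀ L, (∀ p ∈ L, p ∈ Z) → u L = v L) : wordSum Z n u = wordSum Z n v := by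
  induction n generalizing u v with
  | zero => exact h [] (by simp)
  | succ n ih =>
    exact sum_congr rfl fun x hx => ih fun L hL => h _ (by simpa [hx] using hL)

lemma wordSum_zero (Z : Finset γ) (n : ℕ) : wordSum Z n (fun _ => (0 : R)) = 0 := by
  induction n with
  | zero => rfl
  | succ n ih => simp [wordSum, ih]

lemma wordSum_add (Z : Finset γ) (n : ℕ) (u v : List γ → R) :
    wordSum Z n (fun L => u L + v L) = wordSum Z n u + wordSum Z n v := by
  induction n generalizing u v with
  | zero => rfl
  | succ n ih => simp only [wordSum, ih, sum_add_distrib]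

lemma wordSum_sum (T : Finset κ) (Z : Finset γ) (n : ℕ) (u : κ → List γ → R) :
    wordSum Z n (fun L => ∑ t ∈ T, u t L) = ∑ t ∈ T, wordSum Z n (u t) := by
  induction n generalizing u with
  | zero => rfl
  | succ n ih =>
    simp only [wordSum]
    rw [sum_comm]
    exact sum_congr rfl fun x _ => ih fun t L => u t (x :: L)

lemma wordSum_of_subset [DecidableEq γ] {Z Z' : Finset γ} (h : Z' ⊆ Z) (n : ℕ) (u : List γ → R) :
    wordSum Z n (fun L => if ∀ p ∈ L, p ∈ Z' then u L else 0) = wordSum Z' n u := by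
  induction n generalizing u with
  | zero => simp [wordSum]
  | succ n ih =>
    simp only [wordSum]
    rw [← sum_subset h]
    · refine sum_congr rfl fun x hx => ?_
      rw [← ih]
      exact wordSum_congr fun L _ => by simp [hx]
    · intro x _ hx
      exact (wordSum_congr fun L _ => by simp [hx]).trans (wordSum_zero Z n)

lemma wordSum_map {δ : Type*} [DecidableEq δ] {Z : Finset γ} {W : Finset δ}
    {f : γ → δ} {d : ℕ} (hf : ∀ x ∈ Z, f x ∈ W) (hd : ∀ y ∈ W, #{x ∈ Z | f x = y} = d) (n : ℕ)
    (u : List δ → R) : wordSum Z n (fun L => u (L.map f)) = d ^ n • wordSum W n u := by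
  induction n generalizing u with
  | zero => simp [wordSum]
  | succ n ih =>
    have fiber (y : δ) (hy : y ∈ W) : ∑ x ∈ Z with f x = y,
        wordSum Z n (fun L => u (f x :: L.map f)) =
          d ^ (n + 1) • wordSum W n fun L => u (y :: L) := by
      rw [sum_congr rfl fun x hx => by rw [(mem_filter.1 hx).2, ih fun L => u (y :: L)],
        sum_const, hd y hy, smul_smul, pow_succ']
    simp only [wordSum, List.map_cons]
    rw [← sum_fiberwise_of_maps_to hf, sum_congr rfl fiber, smul_sum]

lemma wordSum_eq_sum_piFinset (Z : Finset γ) (n : ℕ) (u : List γ → R) :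
    wordSum Z n u = ∑ τ ∈ Fintype.piFinset fun _ : Fin n => Z, u (List.ofFn τ) := by
  induction n generalizing u with
  | zero => simp [wordSum]
  | succ n ih =>
    simp only [wordSum, ih]
    rw [sum_sigma']
    refine sum_bij' (fun p _ => (Fin.cons p.1 p.2 : Fin (n + 1) → γ))
      (fun τ _ => ⟨τ 0, Fin.tail τ⟩) ?_ ?_ ?_ ?_ ?_
    · simp +contextual [Fin.forall_fin_succ]
    · simp +contextual [Fin.forall_fin_succ, Fin.tail]
    · simp
    · simp
    · simp [List.ofFn_succ]

end AddCommMonoid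

/-- Words in a disjoint union of two alphabets are shuffles of words in the two alphabets. -/
lemma wordSum_union_filter_mul_filter [DecidableEq γ] [Semiring R] {X Y : Finset γ}
    (hXY : Disjoint X Y) (n : ℕ) (u v : List γ → R) :
    wordSum (X ∪ Y) n (fun L => u (L.filter (· ∈ X)) * v (L.filter (· ∈ Y))) =
      ∑ ij ∈ antidiagonal n, (n.choose ij.1 : R) * (wordSum X ij.1 u * wordSum Y ij.2 v) := by
  induction n generalizing u v with
  | zero => simp [wordSum]
  | succ n ih =>
    have first_in_X : ∀ x ∈ X, wordSum (X ∪ Y) n (fun L => u ((x :: L).filter (· ∈ X)) *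
        v ((x :: L).filter (· ∈ Y))) = ∑ ij ∈ antidiagonal n, (n.choose ij.2 : R) *
          (wordSum X ij.1 (fun L => u (x :: L)) * wordSum Y ij.2 v) := by
      intro x hx
      rw [sum_congr rfl fun ij hij => by
        rw [← Nat.choose_symm_of_eq_add (mem_antidiagonal.1 hij).symm], ← ih]
      exact wordSum_congr fun L _ => by simp [hx, disjoint_left.1 hXY hx]
    have first_in_Y : ∀ y ∈ Y, wordSum (X ∪ Y) n (fun L => u ((y :: L).filter (· ∈ X)) *
        v ((y :: L).filter (· ∈ Y))) = ∑ ij ∈ antidiagonal n, (n.choose ij.1 : R) *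
          (wordSum X ij.1 u * wordSum Y ij.2 (fun L => v (y :: L))) := by
      intro y hy
      rw [← ih]
      exact wordSum_congr fun L _ => by simp [hy, disjoint_right.1 hXY hy]
    rw [sum_antidiagonal_choose_succ_mul fun i j => wordSum X i u * wordSum Y j v]
    simp only [wordSum]
    rw [sum_union hXY, sum_congr rfl first_in_X, sum_congr rfl first_in_Y, add_comm, sum_comm,
      sum_comm (s := X)]
    simp only [mul_sum, sum_mul]

end WordSum

section Joined

variable {α : Type*}

/-- Two points are joined by a list of pairs if they lie in the same connected component of the
graph whose edges are these pairs. -/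
def Joined (L : List (α × α)) : α → α → Prop :=
  Relation.EqvGen fun x y => (x, y) ∈ L

/-- A set is saturated for a list of pairs if no pair has exactly one entry in it, that is, if it is
a union of connected components. -/
def IsSaturated (L : List (α × α)) (X : Finset α) : Prop :=
  ∀ p ∈ L, p.1 ∈ X ↔ p.2 ∈ X

variable {L L' : List (α × α)} {X : Finset α} {x y z : α}

lemma Joined.refl (x : α) : Joined L x x :=
  Relation.EqvGen.refl x

lemma Joined.symm (h : Joined L x y) : Joined L y x :=
  Relation.EqvGen.symm _ _ h

lemma Joined.trans (hxy : Joined L x y) (hyz : Joined L y z) : Joined L x z :=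
  Relation.EqvGen.trans _ _ _ hxy hyz

lemma joined_of_mem {p : α × α} (hp : p ∈ L) : Joined L p.1 p.2 :=
  Relation.EqvGen.rel _ _ hp

lemma Joined.rel_of_equivalence {E : α → α → Prop} (hE : Equivalence E)
    (hL : ∀ p ∈ L, E p.1 p.2) (h : Joined L x y) : E x y :=
  hE.eqvGen_iff.1 (Relation.EqvGen.mono (fun x y hp => hL (x, y) hp) _ _ h)

lemma Joined.mono (hL : L ⊆ L') (h : Joined L x y) : Joined L' x y :=
  h.rel_of_equivalence ⟨.refl, .symm, .trans⟩ fun _ hp => joined_of_mem (hL hp)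

lemma Joined.cons (p : α × α) (h : Joined L x y) : Joined (p :: L) x y :=
  h.mono (List.subset_cons_self p L)

lemma Joined.of_cons_of_joined {p : α × α} (hp : Joined L p.1 p.2) (h : Joined (p :: L) x y) :
    Joined L x y :=
  h.rel_of_equivalence ⟨.refl, .symm, .trans⟩ (List.forall_mem_cons.2 ⟨hp, fun _ => joined_of_mem⟩)

lemma Joined.joined_or_joined_of_cons {p : α × α} (h : Joined (p :: L) x y)
    (hx : Joined L p.1 x ∨ Joined L p.2 x) : Joined L p.1 y ∨ Joined L p.2 y := by
  refine (h.rel_of_equivalence (E := fun x y => (Joined L p.1 x ∨ Joined L p.2 x) ↔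
    (Joined L p.1 y ∨ Joined L p.2 y)) ⟨fun _ => .rfl, .symm, .trans⟩ ?_).1 hx
  refine List.forall_mem_cons.2 ⟨iff_of_true (.inl (.refl _)) (.inr (.refl _)), fun q hq => ?_⟩
  have hq := joined_of_mem hq
  exact or_congr ⟨(·.trans hq), (·.trans hq.symm)⟩ ⟨(·.trans hq), (·.trans hq.symm)⟩

lemma IsSaturated.mem_iff (hX : IsSaturated L X) (h : Joined L x y) : x ∈ X ↔ y ∈ X :=
  h.rel_of_equivalence (E := fun x y => x ∈ X ↔ y ∈ X) ⟨fun _ => .rfl, .symm, .trans⟩ hX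

lemma IsSaturated.filter_joined {A : Finset α} (hA : IsSaturated L A) (a : α)
    [DecidablePred (Joined L a)] : IsSaturated L (A.filter (Joined L a)) := by
  intro p hp
  have hp' := joined_of_mem hp
  simp only [mem_filter, hA p hp]
  exact and_congr_right fun _ => ⟨(·.trans hp'), (·.trans hp'.symm)⟩

lemma isSaturated_of_forall_mem_offDiag {A : Finset α} (hL : ∀ p ∈ L, p ∈ A.offDiag) :
    IsSaturated L A :=
  fun p hp => have h := mem_offDiag.1 (hL p hp); iff_of_true h.1 h.2.1

variable [DecidableEq α]

lemma IsSaturated.sdiff {A : Finset α} (hA : IsSaturated L A) (hX : IsSaturated L X) :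
    IsSaturated L (A \ X) :=
  fun p hp => by simp only [mem_sdiff, hA p hp, hX p hp]

lemma IsSaturated.joined_filter_iff (hX : IsSaturated L X) (hx : x ∈ X) :
    Joined (L.filter (·.1 ∈ X)) x y ↔ Joined L x y := by
  refine ⟨(·.mono (List.filter_subset_self _)), fun h => ?_⟩
  let E (x y : α) : Prop := (x ∈ X ↔ y ∈ X) ∧ (x ∈ X → Joined (L.filter (·.1 ∈ X)) x y)
  have hE : Equivalence E :=
    ⟨fun x => ⟨.rfl, fun _ => .refl x⟩, fun h => ⟨h.1.symm, fun hy => (h.2 (h.1.2 hy)).symm⟩,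
      fun h h' => ⟨h.1.trans h'.1, fun hx => (h.2 hx).trans (h'.2 (h.1.1 hx))⟩⟩
  refine (h.rel_of_equivalence hE fun p hp => ⟨hX p hp, fun hpX => joined_of_mem ?_⟩).2 hx
  simp [hp, hpX]

/-- The product of the transpositions of the pairs in a list. -/
def swapProd (L : List (α × α)) : Equiv.Perm α :=
  (L.map fun p => Equiv.swap p.1 p.2).prod

lemma swapProd_cons (p : α × α) (L : List (α × α)) :
    swapProd (p :: L) = Equiv.swap p.1 p.2 * swapProd L := by
  simp [swapProd]

lemma joined_swapProd (L : List (α × α)) (x : α) : Joined L x (swapProd L x) := by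
  induction L with
  | nil => exact .refl x
  | cons p L ih =>
    have hp : Joined (p :: L) p.1 p.2 := joined_of_mem List.mem_cons_self
    rw [swapProd_cons, Equiv.Perm.mul_apply]
    refine (ih.cons p).trans ?_
    rw [Equiv.swap_apply_def]
    split_ifs with h₁ h₂
    · exact h₁ ▸ hp
    · exact h₂ ▸ hp.symm
    · exact .refl _

lemma IsSaturated.swapProd_filter_apply (hX : IsSaturated L X) (hx : x ∈ X) :
    swapProd (L.filter (·.1 ∈ X)) x = swapProd L x := by
  induction L with
  | nil => rfl
  | cons p L ih =>
    obtain ⟨hp, hL⟩ := List.forall_mem_cons.1 hX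
    have hLx : swapProd L x ∈ X := (IsSaturated.mem_iff hL (joined_swapProd L x)).1 hx
    by_cases hpX : p.1 ∈ X
    · rw [List.filter_cons_of_pos (by simpa using hpX), swapProd_cons, swapProd_cons,
        Equiv.Perm.mul_apply, Equiv.Perm.mul_apply, ih hL]
    · rw [List.filter_cons_of_neg (by simpa using hpX), ih hL, swapProd_cons,
        Equiv.Perm.mul_apply, Equiv.swap_apply_of_ne_of_ne]
      · exact fun h => hpX (h ▸ hLx)
      · exact fun h => hpX (hp.2 (h ▸ hLx))

end Joined

section ConnectedFactorization

variable {α : Type*} [DecidableEq α]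

/-- A list of pairs of points is a connected factorization of `σ` on `A` if the product of the
corresponding transpositions agrees with `σ` on `A` and the pairs join any two points of `A`. -/
def IsConnectedFactorization (A : Finset α) (σ : Equiv.Perm α) (L : List (α × α)) : Prop :=
  (∀ x ∈ A, swapProd L x = σ x) ∧ ∀ x ∈ A, ∀ y ∈ A, Joined L x y

variable {A X : Finset α} {σ : Equiv.Perm α} {L : List (α × α)} {a b : α}

lemma IsSaturated.isConnectedFactorization_filter_iff (hX : IsSaturated L X) :
    IsConnectedFactorization X σ (L.filter (·.1 ∈ X)) ↔ IsConnectedFactorization X σ L :=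
  and_congr (forall₂_congr fun _ hx => by rw [hX.swapProd_filter_apply hx])
    (forall₂_congr fun _ hx => forall₂_congr fun _ _ => hX.joined_filter_iff hx)

lemma swapProd_cons_apply_eq_iff (p : α × α) (x : α) :
    swapProd (p :: L) x = σ x ↔ swapProd L x = (Equiv.swap p.1 p.2 * σ) x := by
  rw [swapProd_cons, Equiv.Perm.mul_apply, Equiv.Perm.mul_apply, Equiv.swap_apply_eq_iff]

lemma isConnectedFactorization_cons_iff_of_joined (hab : Joined L a b) :
    IsConnectedFactorization A σ ((a, b) :: L) ↔
      IsConnectedFactorization A (Equiv.swap a b * σ) L :=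
  and_congr (forall₂_congr fun x _ => swapProd_cons_apply_eq_iff (a, b) x)
    (forall₂_congr fun _ _ => forall₂_congr fun _ _ => ⟨.of_cons_of_joined hab, .cons _⟩)

open scoped Classical in
lemma isConnectedFactorization_cons_iff_of_not_joined (ha : a ∈ A) (hb : b ∈ A)
    (hab : ¬Joined L a b) :
    IsConnectedFactorization A σ ((a, b) :: L) ↔
      IsConnectedFactorization (A.filter (Joined L a)) (Equiv.swap a b * σ) L ∧
        IsConnectedFactorization (A \ A.filter (Joined L a)) (Equiv.swap a b * σ) L := by
  have hb' : b ∈ A \ A.filter (Joined L a) := by simp [hb, hab]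
  constructor
  · rintro ⟨hσ, hconn⟩
    have hσ' : ∀ x ∈ A, swapProd L x = (Equiv.swap a b * σ) x :=
      fun x hx => (swapProd_cons_apply_eq_iff (a, b) x).1 (hσ x hx)
    have joined_b : ∀ x ∈ A \ A.filter (Joined L a), Joined L b x := by
      intro x hx
      obtain ⟨hxA, hax⟩ : x ∈ A ∧ ¬Joined L a x := by
        rw [mem_sdiff, mem_filter] at hx
        tauto
      exact ((hconn a ha x hxA).joined_or_joined_of_cons (.inl (.refl a))).resolve_left hax
    exact ⟨⟨fun x hx => hσ' x (mem_filter.1 hx).1, fun x hx y hy =>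
        (mem_filter.1 hx).2.symm.trans (mem_filter.1 hy).2⟩,
      fun x hx => hσ' x (mem_sdiff.1 hx).1, fun x hx y hy =>
        (joined_b x hx).symm.trans (joined_b y hy)⟩
  · rintro ⟨⟨hσ₁, -⟩, hσ₂, hconn⟩
    have joined_a : ∀ x ∈ A, Joined ((a, b) :: L) a x := by
      intro x hx
      by_cases hax : Joined L a x
      · exact hax.cons _
      · have hbx : Joined L b x := hconn b hb' x (by simp [hx, hax])
        exact (joined_of_mem (p := (a, b)) List.mem_cons_self).trans (hbx.cons _)
    refine ⟨fun x hx => (swapProd_cons_apply_eq_iff (a, b) x).2 ?_, fun x hx y hy =>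
      (joined_a x hx).symm.trans (joined_a y hy)⟩
    by_cases hax : Joined L a x
    · exact hσ₁ x (mem_filter.2 ⟨hx, hax⟩)
    · exact hσ₂ x (by simp [hx, hax])

open scoped Classical in
lemma IsConnectedFactorization.eq_filter_joined (hXA : X ⊆ A) (ha : a ∈ X) (hX : IsSaturated L X)
    (h : IsConnectedFactorization X σ L) : X = A.filter (Joined L a) := by
  ext x
  exact ⟨fun hx => mem_filter.2 ⟨hXA hx, h.2 a ha x hx⟩,
    fun hx => (hX.mem_iff (mem_filter.1 hx).2).1 ha⟩

open scoped Classical in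
lemma ite_isConnectedFactorization_cons (hL : IsSaturated L A) (ha : a ∈ A) (hb : b ∈ A) :
    (if IsConnectedFactorization A σ ((a, b) :: L) then 1 else 0) =
      (if IsConnectedFactorization A (Equiv.swap a b * σ) L then 1 else 0) +
        ∑ X ∈ A.powerset with a ∈ X ∧ b ∉ X,
          if IsSaturated L X ∧ IsConnectedFactorization X (Equiv.swap a b * σ) L ∧
            IsConnectedFactorization (A \ X) (Equiv.swap a b * σ) L then 1 else 0 := by
  by_cases hab : Joined L a b
  · rw [sum_eq_zero, add_zero, if_congr (isConnectedFactorization_cons_iff_of_joined hab) rfl rfl]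
    intro X hX
    obtain ⟨-, haX, hbX⟩ := mem_filter.1 hX
    exact if_neg fun h => hbX ((h.1.mem_iff hab).1 haX)
  · rw [if_neg (c := IsConnectedFactorization A _ L) fun h => hab (h.2 a ha b hb), zero_add,
      sum_eq_single_of_mem (A.filter (Joined L a))]
    · refine if_congr ?_ rfl rfl
      rw [isConnectedFactorization_cons_iff_of_not_joined ha hb hab]
      exact (and_iff_right (hL.filter_joined a)).symm
    · simp [ha, hab, Joined.refl]
    · intro X hX hne
      obtain ⟨hXA, haX, -⟩ := mem_filter.1 hX
      exact if_neg fun h => hne (h.2.1.eq_filter_joined (mem_powerset.1 hXA) haX h.1)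

open scoped Classical in
/-- The number of connected factorizations of `σ` on `A` into `n` transpositions of points of `A`,
each transposition being counted twice, as `(a, b)` and as `(b, a)`. -/
noncomputable def connectedCount (A : Finset α) (σ : Equiv.Perm α) (n : ℕ) : ℕ :=
  wordSum A.offDiag n fun L => if IsConnectedFactorization A σ L then 1 else 0

open scoped Classical in
/-- The number of connected factorizations of `σ` on `A` into `n + 1` transpositions of points of
`A`, counted as in `connectedCount`, whose first pair is `(a, b)`. -/
noncomputable def connectedCountCons (A : Finset α) (σ : Equiv.Perm α) (a b : α) (n : ℕ) : ℕ :=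
  wordSum A.offDiag n fun L => if IsConnectedFactorization A σ ((a, b) :: L) then 1 else 0

lemma connectedCount_succ (A : Finset α) (σ : Equiv.Perm α) (n : ℕ) :
    connectedCount A σ (n + 1) = ∑ a ∈ A, ∑ b ∈ A.erase a, connectedCountCons A σ a b n :=
  sum_finset_product _ _ _ fun p => by
    rw [mem_offDiag, mem_erase]
    tauto

/-- The number of words of `n` transpositions of points of `A` that are shuffles of a connected
factorization of `σ` on `X` with one on `A \ X`, each transposition being counted twice. -/
noncomputable def splitCount (A X : Finset α) (σ : Equiv.Perm α) (n : ℕ) : ℕ :=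
  ∑ ij ∈ antidiagonal n,
    n.choose ij.1 * (connectedCount X σ ij.1 * connectedCount (A \ X) σ ij.2)

lemma mapsTo_of_connectedCount_ne_zero {n : ℕ} (h : connectedCount A σ n ≠ 0) :
    ∀ x ∈ A, σ x ∈ A := by
  classical
  contrapose! h
  obtain ⟨x, hx, hσx⟩ := h
  refine (wordSum_congr fun L hL => if_neg fun h => hσx ?_).trans (wordSum_zero A.offDiag n)
  rw [← h.1 x hx]
  exact ((isSaturated_of_forall_mem_offDiag hL).mem_iff (joined_swapProd L x)).1 hx

lemma disjoint_offDiag_offDiag_sdiff (A X : Finset α) : Disjoint X.offDiag (A \ X).offDiag :=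
  disjoint_left.2 fun _ hp hp' =>
    (mem_sdiff.1 (mem_offDiag.1 hp').1).2 (mem_offDiag.1 hp).1

lemma forall_mem_offDiag_union_iff (hL : ∀ p ∈ L, p ∈ A.offDiag) :
    (∀ p ∈ L, p ∈ X.offDiag ∪ (A \ X).offDiag) ↔ IsSaturated L X := by
  refine forall₂_congr fun p hp => ?_
  obtain ⟨h₁, h₂, hne⟩ := mem_offDiag.1 (hL p hp)
  simp only [mem_union, mem_offDiag, mem_sdiff, h₁, h₂]
  tauto

open scoped Classical in
lemma wordSum_ite_isSaturated (hXA : X ⊆ A) (σ : Equiv.Perm α) (n : ℕ) :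
    (wordSum A.offDiag n fun L => if IsSaturated L X ∧ IsConnectedFactorization X σ L ∧
        IsConnectedFactorization (A \ X) σ L then 1 else 0) = splitCount A X σ n := by
  have hsub : X.offDiag ∪ (A \ X).offDiag ⊆ A.offDiag :=
    union_subset (offDiag_mono hXA) (offDiag_mono sdiff_subset)
  have hshuffle := wordSum_union_filter_mul_filter (disjoint_offDiag_offDiag_sdiff A X) n
    (fun L => if IsConnectedFactorization X σ L then 1 else 0)
    (fun L => if IsConnectedFactorization (A \ X) σ L then 1 else 0)
  simp only [Nat.cast_id] at hshuffle
  simp only [splitCount, connectedCount]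
  rw [← hshuffle, ← wordSum_of_subset hsub]
  refine wordSum_congr fun L hLA => ?_
  rw [ite_and, if_congr (forall_mem_offDiag_union_iff hLA).symm rfl rfl]
  refine ite_congr rfl (fun hL => ?_) fun _ => rfl
  have hX : IsSaturated L X := (forall_mem_offDiag_union_iff hLA).1 hL
  have hAX : IsSaturated L (A \ X) := (isSaturated_of_forall_mem_offDiag hLA).sdiff hX
  have filter_X : L.filter (· ∈ X.offDiag) = L.filter (·.1 ∈ X) :=
    List.filter_congr fun p hp => by
      have := (mem_offDiag.1 (hLA p hp)).2.2
      simp [mem_offDiag, ← hX p hp, this]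
  have filter_AX : L.filter (· ∈ (A \ X).offDiag) = L.filter (·.1 ∈ A \ X) :=
    List.filter_congr fun p hp => by
      have := (mem_offDiag.1 (hLA p hp)).2.2
      simp [mem_offDiag, ← hAX p hp, this, -mem_sdiff]
  rw [filter_X, filter_AX, if_congr hX.isConnectedFactorization_filter_iff rfl rfl,
    if_congr hAX.isConnectedFactorization_filter_iff rfl rfl, ite_and, ite_zero_mul, one_mul]

theorem connectedCountCons_eq (σ : Equiv.Perm α) (ha : a ∈ A) (hb : b ∈ A) (n : ℕ) :
    connectedCountCons A σ a b n = connectedCount A (Equiv.swap a b * σ) n +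
      ∑ X ∈ A.powerset with a ∈ X ∧ b ∉ X, splitCount A X (Equiv.swap a b * σ) n := by
  classical
  rw [connectedCountCons, wordSum_congr fun L hL =>
    ite_isConnectedFactorization_cons (isSaturated_of_forall_mem_offDiag hL) ha hb,
    wordSum_add, wordSum_sum]
  refine congrArg _ (sum_congr rfl fun X hX => ?_)
  exact wordSum_ite_isSaturated (mem_powerset.1 (mem_filter.1 hX).1) _ n

end ConnectedFactorization

section Cycles

variable {α : Type*} {σ : Equiv.Perm α} {a b x y : α}

lemma pow_minimalPeriod_apply (σ : Equiv.Perm α) (x : α) :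
    (σ ^ Function.minimalPeriod σ x) x = x := by
  rw [Equiv.Perm.coe_pow, Function.iterate_minimalPeriod]

lemma pow_apply_injOn_minimalPeriod (σ : Equiv.Perm α) (x : α) :
    Set.InjOn (fun j : ℕ => (σ ^ j) x) (Set.Iio (Function.minimalPeriod σ x)) := by
  simpa only [Equiv.Perm.coe_pow] using Function.iterate_injOn_Iio_minimalPeriod

lemma pow_apply_ne_self {j : ℕ} (hj : 0 < j) (hj' : j < Function.minimalPeriod σ x) :
    (σ ^ j) x ≠ x := by
  rw [Equiv.Perm.coe_pow]
  exact fun h => Function.not_isPeriodicPt_of_pos_of_lt_minimalPeriod hj.ne' hj' h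

lemma pow_apply_ne_and_ne {i : ℕ} (hi : i < Function.minimalPeriod σ a) :
    ∀ j < i, 0 < j → (σ ^ j) a ≠ a ∧ (σ ^ j) a ≠ (σ ^ i) a :=
  fun _ hj hj0 => ⟨pow_apply_ne_self hj0 (hj.trans hi), fun h =>
    hj.ne (pow_apply_injOn_minimalPeriod σ a (hj.trans hi) hi h)⟩

lemma minimalPeriod_pos [Finite α] (σ : Equiv.Perm α) (x : α) : 0 < Function.minimalPeriod σ x :=
  Function.minimalPeriod_pos_of_mem_periodicPts (σ.injective.mem_periodicPts x)

lemma exists_lt_pow_apply_eq [Finite α] {n : ℕ} (hn : 0 < n) (hx : (σ ^ n) x = x)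
    (h : σ.SameCycle x y) : ∃ j < n, (σ ^ j) x = y := by
  obtain ⟨j, rfl⟩ := h.exists_nat_pow_eq
  have hper : Function.IsPeriodicPt σ n x := by rwa [Equiv.Perm.coe_pow] at hx
  refine ⟨j % n, Nat.mod_lt j hn, ?_⟩
  rw [Equiv.Perm.coe_pow, Equiv.Perm.coe_pow, hper.iterate_mod_apply]

lemma exists_lt_minimalPeriod_pow_apply_eq [Finite α] (h : σ.SameCycle x y) :
    ∃ j < Function.minimalPeriod σ x, (σ ^ j) x = y :=
  exists_lt_pow_apply_eq (minimalPeriod_pos σ x) (pow_minimalPeriod_apply σ x) h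

lemma mem_of_sameCycle [Finite α] {X : Finset α} (hX : ∀ x ∈ X, σ x ∈ X) (ha : a ∈ X)
    (h : σ.SameCycle a b) : b ∈ X := by
  obtain ⟨j, rfl⟩ := h.exists_nat_pow_eq
  rw [Equiv.Perm.coe_pow]
  exact Set.MapsTo.iterate (s := (X : Set α)) hX j ha

variable [DecidableEq α]

lemma card_image_range_pow {n : ℕ} (hn : n ≤ Function.minimalPeriod σ x) :
    #((range n).image fun j => (σ ^ j) x) = n := by
  rw [card_image_of_injOn, card_range]
  exact (pow_apply_injOn_minimalPeriod σ x).mono fun j hj => (mem_range.1 hj).trans_le hn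

lemma swap_mul_pow_apply {i : ℕ} (h : ∀ j < i, 0 < j → (σ ^ j) x ≠ a ∧ (σ ^ j) x ≠ b) :
    ∀ j < i, ((Equiv.swap a b * σ) ^ j) x = (σ ^ j) x := by
  intro j hj
  induction j with
  | zero => rfl
  | succ j ih =>
    rw [pow_succ', Equiv.Perm.mul_apply, ih (by omega), Equiv.Perm.mul_apply,
      ← Equiv.Perm.mul_apply σ, ← pow_succ']
    exact Equiv.swap_apply_of_ne_of_ne (h _ hj j.succ_pos).1 (h _ hj j.succ_pos).2

lemma swap_mul_pow_apply_self {i : ℕ} (hi : 0 < i)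
    (h : ∀ j < i, 0 < j → (σ ^ j) x ≠ a ∧ (σ ^ j) x ≠ b) :
    ((Equiv.swap a b * σ) ^ i) x = Equiv.swap a b ((σ ^ i) x) := by
  obtain ⟨j, rfl⟩ := Nat.exists_eq_succ_of_ne_zero hi.ne'
  rw [Nat.succ_eq_add_one, pow_succ', Equiv.Perm.mul_apply, swap_mul_pow_apply h j j.lt_succ_self,
    Equiv.Perm.mul_apply, pow_succ', Equiv.Perm.mul_apply]

lemma swap_pow_mul_pow_apply_self {i : ℕ} (hi : 0 < i) (hi' : i < Function.minimalPeriod σ a) :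
    ((Equiv.swap a ((σ ^ i) a) * σ) ^ i) a = a := by
  rw [swap_mul_pow_apply_self hi (pow_apply_ne_and_ne hi'), Equiv.swap_apply_right]

lemma not_sameCycle_swap_mul [Finite α] (hab : a ≠ b) (h : σ.SameCycle a b) :
    ¬(Equiv.swap a b * σ).SameCycle a b := by
  obtain ⟨i, hi, rfl⟩ := exists_lt_minimalPeriod_pow_apply_eq h
  have hi0 : 0 < i := Nat.pos_of_ne_zero (by rintro rfl; exact hab rfl)
  intro h'
  obtain ⟨j, hj, hji⟩ := exists_lt_pow_apply_eq hi0 (swap_pow_mul_pow_apply_self hi0 hi) h'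
  rw [swap_mul_pow_apply (pow_apply_ne_and_ne hi) j hj] at hji
  exact hj.ne (pow_apply_injOn_minimalPeriod σ a (hj.trans hi) hi hji)

lemma sameCycle_swap_mul [Finite α] (h : ¬σ.SameCycle a b) :
    (Equiv.swap a b * σ).SameCycle a b := by
  have hne : ∀ j < Function.minimalPeriod σ a, 0 < j → (σ ^ j) a ≠ a ∧ (σ ^ j) a ≠ b :=
    fun j hj hj0 => ⟨pow_apply_ne_self hj0 hj, fun hjb => h ⟨j, by simpa using hjb⟩⟩
  refine ⟨Function.minimalPeriod σ a, ?_⟩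
  rw [zpow_natCast, swap_mul_pow_apply_self (minimalPeriod_pos σ a) hne, pow_minimalPeriod_apply,
    Equiv.swap_apply_left]

lemma sameCycle_swap_mul_or [Finite α] (a b : α) (h : σ.SameCycle x y) :
    (Equiv.swap a b * σ).SameCycle x y ∨ (Equiv.swap a b * σ).SameCycle a y ∨
      (Equiv.swap a b * σ).SameCycle b y := by
  obtain ⟨j, rfl⟩ := h.exists_nat_pow_eq
  clear h
  induction j with
  | zero => exact .inl .rfl
  | succ j ih =>
    rw [pow_succ', Equiv.Perm.mul_apply]
    by_cases ha : σ ((σ ^ j) x) = a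
    · exact .inr (.inl (ha ▸ .rfl))
    by_cases hb : σ ((σ ^ j) x) = b
    · exact .inr (.inr (hb ▸ .rfl))
    rw [← Equiv.swap_apply_of_ne_of_ne ha hb, ← Equiv.Perm.mul_apply (Equiv.swap a b)]
    simpa only [Equiv.Perm.sameCycle_apply_right] using ih

variable [Fintype α]

/-- The set of points of the cycle of `σ` through `x`; it is `{x}` if `x` is fixed. -/
def cycleSet (σ : Equiv.Perm α) (x : α) : Finset α :=
  univ.filter (σ.SameCycle x)

@[simp]
lemma mem_cycleSet : y ∈ cycleSet σ x ↔ σ.SameCycle x y := by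
  simp [cycleSet]

lemma mem_cycleSet_self (σ : Equiv.Perm α) (x : α) : x ∈ cycleSet σ x :=
  mem_cycleSet.2 .rfl

lemma cycleSet_eq_iff : cycleSet σ x = cycleSet σ y ↔ σ.SameCycle x y :=
  ⟨fun h => mem_cycleSet.1 (h ▸ mem_cycleSet_self σ y), fun h => Finset.ext fun z => by
    simpa only [mem_cycleSet] using ⟨h.symm.trans, h.trans⟩⟩

lemma cycleSet_eq_image_range {n : ℕ} (hn : 0 < n) (hx : (σ ^ n) x = x) :
    cycleSet σ x = (range n).image fun j => (σ ^ j) x := by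
  ext y
  simp only [mem_cycleSet, mem_image, mem_range]
  exact ⟨exists_lt_pow_apply_eq hn hx, fun ⟨j, _, hj⟩ => ⟨j, by simpa using hj⟩⟩

lemma card_cycleSet (σ : Equiv.Perm α) (x : α) :
    #(cycleSet σ x) = Function.minimalPeriod σ x := by
  rw [cycleSet_eq_image_range (minimalPeriod_pos σ x) (pow_minimalPeriod_apply σ x),
    card_image_range_pow le_rfl]

lemma card_cycleSet_swap_pow_mul {i : ℕ} (hi : 0 < i) (hi' : i < Function.minimalPeriod σ a) :
    #(cycleSet (Equiv.swap a ((σ ^ i) a) * σ) a) = i := by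
  rw [cycleSet_eq_image_range hi (swap_pow_mul_pow_apply_self hi hi'),
    image_congr fun j hj => swap_mul_pow_apply (pow_apply_ne_and_ne hi') j (mem_range.1 hj),
    card_image_range_pow hi'.le]

lemma sum_card_cycleSet_swap_mul {R : Type*} [AddCommMonoid R] (σ : Equiv.Perm α) (a : α)
    (F : ℕ → R) : ∑ b ∈ (cycleSet σ a).erase a, F #(cycleSet (Equiv.swap a b * σ) a) =
      ∑ r ∈ Ico 1 #(cycleSet σ a), F r := by
  rw [card_cycleSet]
  symm
  refine sum_bij (fun i _ => (σ ^ i) a) ?_ ?_ ?_ ?_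
  · intro i hi
    have hi := mem_Ico.1 hi
    exact mem_erase.2 ⟨pow_apply_ne_self hi.1 hi.2, mem_cycleSet.2 ⟨i, by simp⟩⟩
  · intro i hi j hj h
    exact pow_apply_injOn_minimalPeriod σ a (mem_Ico.1 hi).2 (mem_Ico.1 hj).2 h
  · intro b hb
    obtain ⟨hba, hab⟩ := mem_erase.1 hb
    obtain ⟨i, hi, rfl⟩ := exists_lt_minimalPeriod_pow_apply_eq (mem_cycleSet.1 hab)
    have hi0 : i ≠ 0 := by rintro rfl; exact hba rfl
    exact ⟨i, mem_Ico.2 ⟨Nat.one_le_iff_ne_zero.2 hi0, hi⟩, rfl⟩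
  · intro i hi
    have hi := mem_Ico.1 hi
    rw [card_cycleSet_swap_pow_mul hi.1 hi.2]

lemma cycleSet_union_cycleSet_subset_swap_mul (σ : Equiv.Perm α) (a b : α) :
    cycleSet σ a ∪ cycleSet σ b ⊆
      cycleSet (Equiv.swap a b * σ) a ∪ cycleSet (Equiv.swap a b * σ) b := by
  intro y hy
  simp only [mem_union, mem_cycleSet] at hy ⊢
  rcases hy with hy | hy <;> have := sameCycle_swap_mul_or a b hy <;> tauto

lemma cycleSet_union_cycleSet_swap_mul (σ : Equiv.Perm α) (a b : α) :
    cycleSet (Equiv.swap a b * σ) a ∪ cycleSet (Equiv.swap a b * σ) b =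
      cycleSet σ a ∪ cycleSet σ b := by
  refine (cycleSet_union_cycleSet_subset_swap_mul σ a b).antisymm' ?_
  simpa only [Equiv.swap_mul_self_mul] using
    cycleSet_union_cycleSet_subset_swap_mul (Equiv.swap a b * σ) a b

lemma sameCycle_swap_mul_of_notMem (hx : x ∉ cycleSet σ a ∪ cycleSet σ b) (h : σ.SameCycle x y) :
    (Equiv.swap a b * σ).SameCycle x y := by
  have hy : y ∉ cycleSet (Equiv.swap a b * σ) a ∪ cycleSet (Equiv.swap a b * σ) b := by
    rw [cycleSet_union_cycleSet_swap_mul]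
    simp only [mem_union, mem_cycleSet] at hx ⊢
    exact fun hy => hx (hy.imp (·.trans h.symm) (·.trans h.symm))
  have := sameCycle_swap_mul_or a b h
  simp only [mem_union, mem_cycleSet] at hy
  tauto

lemma cycleSet_swap_mul_of_notMem (hx : x ∉ cycleSet σ a ∪ cycleSet σ b) :
    cycleSet (Equiv.swap a b * σ) x = cycleSet σ x := by
  ext y
  rw [mem_cycleSet, mem_cycleSet]
  refine ⟨fun h => ?_, sameCycle_swap_mul_of_notMem hx⟩
  rw [← cycleSet_union_cycleSet_swap_mul] at hx
  simpa only [Equiv.swap_mul_self_mul] using sameCycle_swap_mul_of_notMem hx h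

end Cycles

section CycleSets

variable {α : Type*} [DecidableEq α]

lemma apply_swap_mul_mem {A : Finset α} {σ : Equiv.Perm α} {a b : α}
    (hA : ∀ x ∈ A, σ x ∈ A) (ha : a ∈ A) (hb : b ∈ A) :
    ∀ x ∈ A, (Equiv.swap a b * σ) x ∈ A := by
  intro x hx
  rw [Equiv.Perm.mul_apply, Equiv.swap_apply_def]
  split_ifs
  exacts [hb, ha, hA x hx]

variable [Fintype α]

/-- The set of cycles of `σ` that meet `A`, fixed points included. -/
def cycleSets (A : Finset α) (σ : Equiv.Perm α) : Finset (Finset α) :=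
  A.image (cycleSet σ)

/-- The multiset of the lengths of the cycles of `σ` that meet `A`, fixed points included. -/
def cycleSizes (A : Finset α) (σ : Equiv.Perm α) : Multiset ℕ :=
  (cycleSets A σ).val.map card

variable {A c X : Finset α} {D : Finset (Finset α)} {σ : Equiv.Perm α} {a b x : α}

lemma cycleSet_mem_cycleSets (hx : x ∈ A) : cycleSet σ x ∈ cycleSets A σ :=
  mem_image_of_mem _ hx

lemma cycleSet_eq_of_mem_cycleSets (hc : c ∈ cycleSets A σ) (hx : x ∈ c) : cycleSet σ x = c := by
  obtain ⟨y, -, rfl⟩ := mem_image.1 hc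
  exact cycleSet_eq_iff.2 (mem_cycleSet.1 hx).symm

lemma nonempty_of_mem_cycleSets (hc : c ∈ cycleSets A σ) : c.Nonempty := by
  obtain ⟨x, -, rfl⟩ := mem_image.1 hc
  exact ⟨x, mem_cycleSet_self σ x⟩

lemma pairwiseDisjoint_cycleSets (A : Finset α) (σ : Equiv.Perm α) :
    (cycleSets A σ : Set (Finset α)).PairwiseDisjoint id :=
  fun _ hc _ hc' hne => disjoint_left.2 fun _ hx hx' =>
    hne ((cycleSet_eq_of_mem_cycleSets hc hx).symm.trans (cycleSet_eq_of_mem_cycleSets hc' hx'))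

lemma cycleSet_subset (hA : ∀ x ∈ A, σ x ∈ A) (hx : x ∈ A) : cycleSet σ x ⊆ A :=
  fun _ hy => mem_of_sameCycle hA hx (mem_cycleSet.1 hy)

lemma mem_biUnion_iff_cycleSet_mem (hD : D ⊆ cycleSets A σ) :
    x ∈ D.biUnion id ↔ cycleSet σ x ∈ D := by
  rw [mem_biUnion]
  constructor
  · rintro ⟨c, hc, hx⟩
    rwa [cycleSet_eq_of_mem_cycleSets (hD hc) hx]
  · exact fun h => ⟨_, h, mem_cycleSet_self σ x⟩

lemma apply_mem_biUnion (hD : D ⊆ cycleSets A σ) : ∀ x ∈ D.biUnion id, σ x ∈ D.biUnion id := by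
  intro x hx
  rw [mem_biUnion_iff_cycleSet_mem hD] at hx ⊢
  rwa [cycleSet_eq_iff.2 (Equiv.Perm.sameCycle_apply_left.2 .rfl)]

lemma cycleSets_biUnion (hD : D ⊆ cycleSets A σ) : cycleSets (D.biUnion id) σ = D := by
  ext c
  constructor
  · intro hc
    obtain ⟨x, hx, rfl⟩ := mem_image.1 hc
    exact (mem_biUnion_iff_cycleSet_mem hD).1 hx
  · intro hc
    obtain ⟨x, hx⟩ := nonempty_of_mem_cycleSets (hD hc)
    exact mem_image.2 ⟨x, mem_biUnion.2 ⟨c, hc, hx⟩, cycleSet_eq_of_mem_cycleSets (hD hc) hx⟩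

lemma biUnion_cycleSets (hA : ∀ x ∈ A, σ x ∈ A) : (cycleSets A σ).biUnion id = A := by
  ext x
  rw [mem_biUnion_iff_cycleSet_mem Subset.rfl]
  refine ⟨fun h => ?_, cycleSet_mem_cycleSets⟩
  obtain ⟨y, hy, hyx⟩ := mem_image.1 h
  exact cycleSet_subset hA hy (hyx ▸ mem_cycleSet_self σ x)

lemma sdiff_biUnion_of_subset_cycleSets (hA : ∀ x ∈ A, σ x ∈ A) (hD : D ⊆ cycleSets A σ) :
    A \ D.biUnion id = (cycleSets A σ \ D).biUnion id := by
  ext x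
  conv_lhs => rw [← biUnion_cycleSets hA]
  rw [mem_sdiff, mem_biUnion_iff_cycleSet_mem Subset.rfl, mem_biUnion_iff_cycleSet_mem hD,
    mem_biUnion_iff_cycleSet_mem sdiff_subset, mem_sdiff]

lemma sum_cycleSet {R : Type*} [NonAssocSemiring R] (hA : ∀ x ∈ A, σ x ∈ A) (g : Finset α → R) :
    ∑ x ∈ A, g (cycleSet σ x) = ∑ c ∈ cycleSets A σ, (#c : R) * g c := by
  rw [sum_comp g (cycleSet σ)]
  refine sum_congr rfl fun c hc => ?_
  have fiber : {x ∈ A | cycleSet σ x = c} = c := by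
    ext x
    rw [mem_filter]
    refine ⟨fun h => h.2 ▸ mem_cycleSet_self σ x, fun hx => ?_⟩
    have hxc := cycleSet_eq_of_mem_cycleSets hc hx
    rw [← biUnion_cycleSets hA, mem_biUnion_iff_cycleSet_mem Subset.rfl, hxc]
    exact ⟨hc, rfl⟩
  rw [fiber, nsmul_eq_mul]

lemma card_biUnion_of_subset_cycleSets (hD : D ⊆ cycleSets A σ) :
    #(D.biUnion id) = ∑ c ∈ D, #c :=
  card_biUnion fun _ hc _ hc' hne => pairwiseDisjoint_cycleSets A σ (hD hc) (hD hc') hne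

lemma sum_card_cycleSets (hA : ∀ x ∈ A, σ x ∈ A) : ∑ c ∈ cycleSets A σ, #c = #A := by
  rw [← card_biUnion_of_subset_cycleSets Subset.rfl, biUnion_cycleSets hA]

lemma cycleSets_eq_insert_insert_erase_erase (ha : a ∈ A) (hb : b ∈ A) :
    cycleSets A σ = insert (cycleSet σ a) (insert (cycleSet σ b)
      (((cycleSets A σ).erase (cycleSet σ a)).erase (cycleSet σ b))) := by
  ext c
  have ha : cycleSet σ a ∈ cycleSets A σ := cycleSet_mem_cycleSets ha
  have hb : cycleSet σ b ∈ cycleSets A σ := cycleSet_mem_cycleSets hb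
  simp only [mem_insert, mem_erase]
  constructor
  · tauto
  · rintro (rfl | rfl | ⟨-, -, h⟩)
    exacts [ha, hb, h]

lemma erase_erase_cycleSets_subset_swap_mul (A : Finset α) (σ : Equiv.Perm α) (a b : α) :
    ((cycleSets A σ).erase (cycleSet σ a)).erase (cycleSet σ b) ⊆
      ((cycleSets A (Equiv.swap a b * σ)).erase (cycleSet (Equiv.swap a b * σ) a)).erase
        (cycleSet (Equiv.swap a b * σ) b) := by
  intro c hc
  simp only [mem_erase] at hc
  obtain ⟨hcb, hca, hc⟩ := hc
  obtain ⟨x, hx, rfl⟩ := mem_image.1 hc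
  have hx' : x ∉ cycleSet σ a ∪ cycleSet σ b := by
    rw [mem_union, mem_cycleSet, mem_cycleSet, ← cycleSet_eq_iff, ← cycleSet_eq_iff]
    exact not_or.2 ⟨Ne.symm hca, Ne.symm hcb⟩
  have hx'' := cycleSet_swap_mul_of_notMem hx'
  rw [← cycleSet_union_cycleSet_swap_mul, mem_union, mem_cycleSet, mem_cycleSet,
    ← cycleSet_eq_iff, ← cycleSet_eq_iff, not_or, hx''] at hx'
  simp only [mem_erase]
  exact ⟨Ne.symm hx'.2, Ne.symm hx'.1, hx'' ▸ cycleSet_mem_cycleSets hx⟩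

lemma erase_erase_cycleSets_swap_mul (A : Finset α) (σ : Equiv.Perm α) (a b : α) :
    ((cycleSets A (Equiv.swap a b * σ)).erase (cycleSet (Equiv.swap a b * σ) a)).erase
        (cycleSet (Equiv.swap a b * σ) b) =
      ((cycleSets A σ).erase (cycleSet σ a)).erase (cycleSet σ b) := by
  refine (erase_erase_cycleSets_subset_swap_mul A σ a b).antisymm' ?_
  simpa only [Equiv.swap_mul_self_mul] using
    erase_erase_cycleSets_subset_swap_mul A (Equiv.swap a b * σ) a b

lemma cycleSets_swap_mul_of_not_sameCycle (ha : a ∈ A) (hb : b ∈ A) (h : ¬σ.SameCycle a b) :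
    cycleSets A (Equiv.swap a b * σ) = insert (cycleSet σ a ∪ cycleSet σ b)
      (((cycleSets A σ).erase (cycleSet σ a)).erase (cycleSet σ b)) := by
  rw [cycleSets_eq_insert_insert_erase_erase ha hb, erase_erase_cycleSets_swap_mul,
    ← cycleSet_union_cycleSet_swap_mul, cycleSet_eq_iff.2 (sameCycle_swap_mul h), union_self,
    insert_idem]

lemma disjoint_cycleSet (h : ¬σ.SameCycle a b) : Disjoint (cycleSet σ a) (cycleSet σ b) :=
  disjoint_left.2 fun _ hx hx' => h ((mem_cycleSet.1 hx).trans (mem_cycleSet.1 hx').symm)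

lemma cycleSet_union_cycleSet_notMem (A : Finset α) (σ : Equiv.Perm α) (a b : α) :
    cycleSet σ a ∪ cycleSet σ b ∉
      ((cycleSets A σ).erase (cycleSet σ a)).erase (cycleSet σ b) := by
  simp only [mem_erase, not_and]
  intro _ hne hmem
  exact hne (cycleSet_eq_of_mem_cycleSets hmem
    (mem_union_left _ (mem_cycleSet_self σ a))).symm

lemma cycleSizes_swap_mul_of_not_sameCycle (ha : a ∈ A) (hb : b ∈ A) (h : ¬σ.SameCycle a b) :
    cycleSizes A (Equiv.swap a b * σ) = (#(cycleSet σ a) + #(cycleSet σ b)) ::ₘ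
      (((cycleSets A σ).erase (cycleSet σ a)).erase (cycleSet σ b)).val.map card := by
  rw [cycleSizes, cycleSets_swap_mul_of_not_sameCycle ha hb h,
    insert_val_of_notMem (cycleSet_union_cycleSet_notMem A σ a b), Multiset.map_cons,
    card_union_of_disjoint (disjoint_cycleSet h)]

lemma card_cycleSets_swap_mul_of_not_sameCycle (ha : a ∈ A) (hb : b ∈ A)
    (h : ¬σ.SameCycle a b) : #(cycleSets A (Equiv.swap a b * σ)) + 1 = #(cycleSets A σ) := by
  rw [cycleSets_swap_mul_of_not_sameCycle ha hb h,
    card_insert_of_notMem (cycleSet_union_cycleSet_notMem A σ a b), card_erase_add_one,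
    card_erase_add_one]
  · exact cycleSet_mem_cycleSets ha
  · exact mem_erase.2 ⟨fun h' => h (cycleSet_eq_iff.1 h'.symm), cycleSet_mem_cycleSets hb⟩

lemma erase_erase_cycleSets_swap_mul_of_sameCycle (A : Finset α) (h : σ.SameCycle a b) :
    ((cycleSets A (Equiv.swap a b * σ)).erase (cycleSet (Equiv.swap a b * σ) a)).erase
        (cycleSet (Equiv.swap a b * σ) b) = (cycleSets A σ).erase (cycleSet σ a) := by
  rw [erase_erase_cycleSets_swap_mul, cycleSet_eq_iff.2 h, erase_idem]

lemma card_cycleSet_swap_mul_add (hab : a ≠ b) (h : σ.SameCycle a b) :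
    #(cycleSet (Equiv.swap a b * σ) a) + #(cycleSet (Equiv.swap a b * σ) b) =
      #(cycleSet σ a) := by
  rw [← card_union_of_disjoint (disjoint_cycleSet (not_sameCycle_swap_mul hab h)),
    cycleSet_union_cycleSet_swap_mul, cycleSet_eq_iff.2 h, union_self]

lemma card_cycleSets_swap_mul_of_sameCycle (ha : a ∈ A) (hb : b ∈ A) (hab : a ≠ b)
    (h : σ.SameCycle a b) : #(cycleSets A (Equiv.swap a b * σ)) = #(cycleSets A σ) + 1 := by
  rw [← card_cycleSets_swap_mul_of_not_sameCycle ha hb (not_sameCycle_swap_mul hab h),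
    Equiv.swap_mul_self_mul]

end CycleSets

section Separation

variable {α : Type*} [DecidableEq α] {A X : Finset α} {σ : Equiv.Perm α} {a b : α} {n : ℕ}

lemma exists_connectedCount_ne_zero_of_splitCount_ne_zero (h : splitCount A X σ n ≠ 0) :
    ∃ i j, i + j = n ∧ connectedCount X σ i ≠ 0 ∧ connectedCount (A \ X) σ j ≠ 0 := by
  obtain ⟨ij, hij, hne⟩ := exists_ne_zero_of_sum_ne_zero h
  exact ⟨ij.1, ij.2, mem_antidiagonal.1 hij,
    left_ne_zero_of_mul (right_ne_zero_of_mul hne), right_ne_zero_of_mul (right_ne_zero_of_mul hne)⟩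

lemma mapsTo_of_splitCount_ne_zero (h : splitCount A X σ n ≠ 0) : ∀ x ∈ X, σ x ∈ X := by
  obtain ⟨_, _, -, hX, -⟩ := exists_connectedCount_ne_zero_of_splitCount_ne_zero h
  exact mapsTo_of_connectedCount_ne_zero hX

variable [Fintype α]

lemma card_cycleSets_add_card_cycleSets_sdiff (hXA : X ⊆ A) (hX : ∀ x ∈ X, σ x ∈ X) :
    #(cycleSets X σ) + #(cycleSets (A \ X) σ) = #(cycleSets A σ) := by
  rw [← card_union_of_disjoint, cycleSets, cycleSets, ← image_union, union_sdiff_of_subset hXA,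
    cycleSets]
  refine disjoint_left.2 fun c hc hc' => ?_
  obtain ⟨x, hx, rfl⟩ := mem_image.1 hc
  obtain ⟨y, hy, hyx⟩ := mem_image.1 hc'
  exact (mem_sdiff.1 hy).2 (mem_of_sameCycle hX hx (cycleSet_eq_iff.1 hyx).symm)

lemma card_cycleSets_le_card_cycleSets_swap_mul_add_one (σ : Equiv.Perm α) (ha : a ∈ A)
    (hb : b ∈ A) (hab : a ≠ b) :
    #(cycleSets A σ) ≤ #(cycleSets A (Equiv.swap a b * σ)) + 1 := by
  by_cases h : σ.SameCycle a b
  · rw [card_cycleSets_swap_mul_of_sameCycle ha hb hab h]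
    omega
  · exact (card_cycleSets_swap_mul_of_not_sameCycle ha hb h).ge

lemma card_add_card_cycleSets_of_connectedCount_zero_ne_zero
    (h : connectedCount A σ 0 ≠ 0) : #A + #(cycleSets A σ) ≤ 2 := by
  have hconn : IsConnectedFactorization A σ [] := by
    by_contra hA
    exact h (if_neg hA)
  have hA : #A ≤ 1 := card_le_one.2 fun x hx y hy =>
    (hconn.2 x hx y hy).rel_of_equivalence eq_equivalence (by simp)
  have hC : #(cycleSets A σ) ≤ #A := card_image_le
  omega

/-- The Riemann–Hurwitz inequality. -/
lemma card_add_card_cycleSets_le (hA : A.Nonempty) (h : connectedCount A σ n ≠ 0) :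
    #A + #(cycleSets A σ) ≤ n + 2 := by
  induction n using Nat.strong_induction_on generalizing A σ with | _ n ih => ?_
  obtain _ | n := n
  · exact card_add_card_cycleSets_of_connectedCount_zero_ne_zero h
  rw [connectedCount_succ] at h
  obtain ⟨a, ha, h⟩ := exists_ne_zero_of_sum_ne_zero h
  obtain ⟨b, hb, h⟩ := exists_ne_zero_of_sum_ne_zero h
  obtain ⟨hba, hb⟩ := mem_erase.1 hb
  rw [connectedCountCons_eq σ ha hb] at h
  by_cases hconn : connectedCount A (Equiv.swap a b * σ) n = 0
  · rw [hconn, zero_add] at h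
    obtain ⟨X, hX, hsplit⟩ := exists_ne_zero_of_sum_ne_zero h
    obtain ⟨hXA, haX, hbX⟩ := mem_filter.1 hX
    have hXA := mem_powerset.1 hXA
    have hXinv := mapsTo_of_splitCount_ne_zero hsplit
    obtain ⟨i, j, hij, hi, hj⟩ := exists_connectedCount_ne_zero_of_splitCount_ne_zero hsplit
    have hX_le := ih i (by omega) ⟨a, haX⟩ hi
    have hAX_le := ih j (by omega) ⟨b, mem_sdiff.2 ⟨hb, hbX⟩⟩ hj
    have hC := card_cycleSets_add_card_cycleSets_sdiff hXA hXinv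
    have hcut := card_cycleSets_swap_mul_of_not_sameCycle ha hb
      fun h => hbX (mem_of_sameCycle hXinv haX h)
    rw [Equiv.swap_mul_self_mul] at hcut
    have hA_card := card_sdiff_add_card_eq_card hXA
    omega
  · have hle := ih n (by omega) hA hconn
    have hC := card_cycleSets_le_card_cycleSets_swap_mul_add_one σ ha hb hba.symm
    omega

lemma sum_powerset_separating {M : Type*} [AddCommMonoid M] (hA : ∀ x ∈ A, σ x ∈ A) (ha : a ∈ A)
    (h : ¬σ.SameCycle a b) {U : Finset α → M}
    (hU : ∀ X, U X ≠ 0 → ∀ x ∈ X, σ x ∈ X) :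
    ∑ X ∈ A.powerset with a ∈ X ∧ b ∉ X, U X =
      ∑ S ∈ (((cycleSets A σ).erase (cycleSet σ a)).erase (cycleSet σ b)).powerset,
        U ((insert (cycleSet σ a) S).biUnion id) := by
  have hne : cycleSet σ b ≠ cycleSet σ a := fun h' => h (cycleSet_eq_iff.1 h'.symm)
  have insert_subset_cycleSets : ∀ S ⊆ ((cycleSets A σ).erase (cycleSet σ a)).erase (cycleSet σ b),
      insert (cycleSet σ a) S ⊆ cycleSets A σ := fun S hS =>
    insert_subset (cycleSet_mem_cycleSets ha)
      (hS.trans ((erase_subset _ _).trans (erase_subset _ _)))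
  symm
  refine sum_of_injOn (fun S => (insert (cycleSet σ a) S).biUnion id) ?_ ?_ ?_ fun _ _ => rfl
  · intro S hS T hT hST
    have hS := mem_powerset.1 hS
    have hT := mem_powerset.1 hT
    have hST := congrArg (cycleSets · σ) hST
    simp only [cycleSets_biUnion (insert_subset_cycleSets _ hS),
      cycleSets_biUnion (insert_subset_cycleSets _ hT)] at hST
    rw [← erase_insert fun h => notMem_erase _ _ (mem_of_mem_erase (hS h)), hST,
      erase_insert fun h => notMem_erase _ _ (mem_of_mem_erase (hT h))]
  · intro S hS
    have hS := mem_powerset.1 hS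
    have hD := insert_subset_cycleSets S hS
    refine mem_filter.2 ⟨mem_powerset.2 ?_, ?_, ?_⟩
    · exact (biUnion_subset_biUnion_of_subset_left id hD).trans (biUnion_cycleSets hA).le
    · exact (mem_biUnion_iff_cycleSet_mem hD).2 (mem_insert_self _ _)
    · rw [mem_biUnion_iff_cycleSet_mem hD, mem_insert, not_or]
      exact ⟨hne, fun h => notMem_erase _ _ (hS h)⟩
  · intro X hX hX'
    obtain ⟨hXA, haX, hbX⟩ := mem_filter.1 hX
    contrapose! hX'
    have hXinv := hU X hX'
    refine ⟨(cycleSets X σ).erase (cycleSet σ a), mem_powerset.2 fun c hc => ?_, ?_⟩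
    · obtain ⟨hca, hc⟩ := mem_erase.1 hc
      refine mem_erase.2 ⟨?_, mem_erase.2 ⟨hca, image_subset_image (mem_powerset.1 hXA) hc⟩⟩
      rintro rfl
      obtain ⟨x, hx, hxb⟩ := mem_image.1 hc
      exact hbX (mem_of_sameCycle hXinv hx (cycleSet_eq_iff.1 hxb))
    · simp only [insert_erase (cycleSet_mem_cycleSets haX), biUnion_cycleSets hXinv]

end Separation

section ConnectedCount

/-- The Hurwitz formula for factorizations of length `n` of minimal length, that is, of genus `0`:
the claim proved by induction on `n`. -/
def HurwitzFormula (α : Type*) [DecidableEq α] [Fintype α] (n : ℕ) : Prop :=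
  ∀ (A : Finset α) (σ : Equiv.Perm α), A.Nonempty → (∀ x ∈ A, σ x ∈ A) →
    n + 2 = #A + #(cycleSets A σ) →
      (connectedCount A σ n : ℚ) = 2 ^ n * n.factorial * hurwitzWeight (cycleSizes A σ)

variable {α : Type*} [DecidableEq α] [Fintype α] {A X : Finset α} {σ : Equiv.Perm α} {a b : α}
  {n : ℕ}

lemma two_le_card_add_card_cycleSets (hA : A.Nonempty) (σ : Equiv.Perm α) :
    2 ≤ #A + #(cycleSets A σ) :=
  Nat.add_le_add hA.card_pos (hA.image _).card_pos

lemma splitCount_eq (hF : ∀ i ≤ n, HurwitzFormula α i) (hA : ∀ x ∈ A, σ x ∈ A) (hXA : X ⊆ A)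
    (hX : ∀ x ∈ X, σ x ∈ X) (hX₀ : X.Nonempty) (hAX₀ : (A \ X).Nonempty)
    (hn : n + 4 = #A + #(cycleSets A σ)) :
    (splitCount A X σ n : ℚ) = 2 ^ n * n.factorial *
      (hurwitzWeight (cycleSizes X σ) * hurwitzWeight (cycleSizes (A \ X) σ)) := by
  have hAX : ∀ x ∈ A \ X, σ x ∈ A \ X := fun x hx => by
    obtain ⟨hxA, hxX⟩ := mem_sdiff.1 hx
    exact mem_sdiff.2 ⟨hA x hxA, fun h =>
      hxX (mem_of_sameCycle hX h (Equiv.Perm.sameCycle_apply_left.2 .rfl))⟩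
  have hcard := card_sdiff_add_card_eq_card hXA
  have hcycle := card_cycleSets_add_card_cycleSets_sdiff hXA hX
  obtain ⟨i, hi⟩ := Nat.exists_eq_add_of_le' (two_le_card_add_card_cycleSets hX₀ σ)
  obtain ⟨j, hj⟩ := Nat.exists_eq_add_of_le' (two_le_card_add_card_cycleSets hAX₀ σ)
  have hij : i + j = n := by omega
  have single_term : splitCount A X σ n =
      n.choose i * (connectedCount X σ i * connectedCount (A \ X) σ j) := by
    refine sum_eq_single_of_mem (i, j) (mem_antidiagonal.2 hij) fun kl hkl hne => ?_
    by_contra hprod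
    have hk := card_add_card_cycleSets_le hX₀ (left_ne_zero_of_mul (right_ne_zero_of_mul hprod))
    have hl := card_add_card_cycleSets_le hAX₀ (right_ne_zero_of_mul (right_ne_zero_of_mul hprod))
    have hkl := mem_antidiagonal.1 hkl
    exact hne (Prod.ext (by dsimp only; omega) (by dsimp only; omega))
  rw [single_term]
  push_cast
  rw [hF i (by omega) X σ hX₀ hX hi.symm, hF j (by omega) (A \ X) σ hAX₀ hAX hj.symm, ← hij,
    Nat.choose_symm_add, ← Nat.add_choose_mul_factorial_mul_factorial i j]
  push_cast
  ring

lemma cycleSizes_biUnion_insert {c : Finset α} {S : Finset (Finset α)}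
    (hS : insert c S ⊆ cycleSets A σ) (hc : c ∉ S) :
    cycleSizes ((insert c S).biUnion id) σ = #c ::ₘ S.val.map card := by
  rw [cycleSizes, cycleSets_biUnion hS, insert_val_of_notMem hc, Multiset.map_cons]

lemma splitCount_biUnion_insert (hF : ∀ i ≤ n, HurwitzFormula α i) (hA : ∀ x ∈ A, σ x ∈ A)
    (hn : n + 4 = #A + #(cycleSets A σ)) (ha : a ∈ A) (hb : b ∈ A) (h : ¬σ.SameCycle a b)
    {R S : Finset (Finset α)} (hR : ((cycleSets A σ).erase (cycleSet σ a)).erase (cycleSet σ b) = R)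
    (hS : S ⊆ R) :
    (splitCount A ((insert (cycleSet σ a) S).biUnion id) σ n : ℚ) = 2 ^ n * n.factorial *
      (hurwitzWeight (#(cycleSet σ a) ::ₘ S.val.map card) *
        hurwitzWeight (#(cycleSet σ b) ::ₘ (R \ S).val.map card)) := by
  have hne : cycleSet σ b ≠ cycleSet σ a := fun h' => h (cycleSet_eq_iff.1 h'.symm)
  have haR : cycleSet σ a ∉ R := fun h' => by simp [← hR] at h'
  have hbR : cycleSet σ b ∉ R := fun h' => by simp [← hR] at h'
  have hC : cycleSets A σ = insert (cycleSet σ a) (insert (cycleSet σ b) R) :=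
    hR ▸ cycleSets_eq_insert_insert_erase_erase ha hb
  have hD : insert (cycleSet σ a) S ⊆ cycleSets A σ :=
    hC ▸ insert_subset_insert _ (hS.trans (subset_insert _ _))
  have hDc : cycleSets A σ \ insert (cycleSet σ a) S = insert (cycleSet σ b) (R \ S) := by
    rw [hC, insert_sdiff_insert, insert_sdiff_of_notMem, sdiff_insert_of_notMem haR]
    simp only [mem_insert, hne, false_or]
    exact fun h' => hbR (hS h')
  have hDc_subset : insert (cycleSet σ b) (R \ S) ⊆ cycleSets A σ := hDc ▸ sdiff_subset
  have hAD := sdiff_biUnion_of_subset_cycleSets hA hD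
  rw [hDc] at hAD
  rw [splitCount_eq hF hA _ (apply_mem_biUnion hD) _ _ hn, hAD,
    cycleSizes_biUnion_insert hD fun h' => haR (hS h'),
    cycleSizes_biUnion_insert hDc_subset fun h' => hbR (mem_sdiff.1 h').1]
  · exact (biUnion_subset_biUnion_of_subset_left id hD).trans (biUnion_cycleSets hA).le
  · exact ⟨a, (mem_biUnion_iff_cycleSet_mem hD).2 (mem_insert_self _ _)⟩
  · exact hAD ▸ ⟨b, (mem_biUnion_iff_cycleSet_mem hDc_subset).2 (mem_insert_self _ _)⟩

lemma connectedCountCons_of_not_sameCycle (hF : HurwitzFormula α n)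
    (hA : ∀ x ∈ A, σ x ∈ A) (hn : n + 3 = #A + #(cycleSets A σ)) (ha : a ∈ A) (hb : b ∈ A)
    (h : ¬σ.SameCycle a b) :
    (connectedCountCons A σ a b n : ℚ) =
      2 ^ n * n.factorial * hurwitzWeight ((#(cycleSet σ a) + #(cycleSet σ b)) ::ₘ
        (((cycleSets A σ).erase (cycleSet σ a)).erase (cycleSet σ b)).val.map card) := by
  have no_split : ∑ X ∈ A.powerset with a ∈ X ∧ b ∉ X,
      splitCount A X (Equiv.swap a b * σ) n = 0 := by
    refine sum_eq_zero fun X hX => ?_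
    obtain ⟨-, haX, hbX⟩ := mem_filter.1 hX
    by_contra hne
    exact hbX (mem_of_sameCycle (mapsTo_of_splitCount_ne_zero hne) haX (sameCycle_swap_mul h))
  have hC := card_cycleSets_swap_mul_of_not_sameCycle ha hb h
  rw [connectedCountCons_eq σ ha hb, no_split, add_zero,
    hF A _ ⟨a, ha⟩ (apply_swap_mul_mem hA ha hb) (by omega),
    cycleSizes_swap_mul_of_not_sameCycle ha hb h]

lemma connectedCount_swap_mul_eq_zero (hn : n + 3 = #A + #(cycleSets A σ)) (ha : a ∈ A)
    (hb : b ∈ A) (hab : a ≠ b) (h : σ.SameCycle a b) :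
    connectedCount A (Equiv.swap a b * σ) n = 0 := by
  by_contra hne
  have hle := card_add_card_cycleSets_le ⟨a, ha⟩ hne
  rw [card_cycleSets_swap_mul_of_sameCycle ha hb hab h] at hle
  omega

lemma connectedCountCons_of_sameCycle (hF : ∀ i ≤ n, HurwitzFormula α i)
    (hA : ∀ x ∈ A, σ x ∈ A) (hn : n + 3 = #A + #(cycleSets A σ)) (ha : a ∈ A) (hb : b ∈ A)
    (hab : a ≠ b) (h : σ.SameCycle a b) :
    (connectedCountCons A σ a b n : ℚ) =
      2 ^ n * n.factorial * ∑ S ∈ ((cycleSets A σ).erase (cycleSet σ a)).powerset,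
        hurwitzWeight (#(cycleSet (Equiv.swap a b * σ) a) ::ₘ S.val.map card) *
        hurwitzWeight ((#(cycleSet σ a) - #(cycleSet (Equiv.swap a b * σ) a)) ::ₘ
          ((cycleSets A σ).erase (cycleSet σ a) \ S).val.map card) := by
  set τ := Equiv.swap a b * σ with hτ
  have hτA : ∀ x ∈ A, τ x ∈ A := apply_swap_mul_mem hA ha hb
  have hτab : ¬τ.SameCycle a b := not_sameCycle_swap_mul hab h
  have hC : #(cycleSets A τ) = #(cycleSets A σ) + 1 :=
    card_cycleSets_swap_mul_of_sameCycle ha hb hab h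
  have hsize : #(cycleSet σ a) - #(cycleSet τ a) = #(cycleSet τ b) := by
    rw [← card_cycleSet_swap_mul_add hab h, ← hτ, Nat.add_sub_cancel_left]
  have hR : ((cycleSets A τ).erase (cycleSet τ a)).erase (cycleSet τ b) =
      (cycleSets A σ).erase (cycleSet σ a) := erase_erase_cycleSets_swap_mul_of_sameCycle A h
  rw [connectedCountCons_eq σ ha hb, ← hτ, connectedCount_swap_mul_eq_zero hn ha hb hab h, zero_add,
    sum_powerset_separating hτA ha hτab fun X => mapsTo_of_splitCount_ne_zero, hR, hsize,
    Nat.cast_sum, mul_sum]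
  refine sum_congr rfl fun S hS => ?_
  exact splitCount_biUnion_insert hF hτA (by omega) ha hb hτab hR (mem_powerset.1 hS)

lemma sdiff_cycleSet_eq_biUnion (hA : ∀ x ∈ A, σ x ∈ A) (ha : a ∈ A) :
    A \ cycleSet σ a = ((cycleSets A σ).erase (cycleSet σ a)).biUnion id := by
  have h := sdiff_biUnion_of_subset_cycleSets hA
    (singleton_subset_iff.2 (cycleSet_mem_cycleSets ha))
  rwa [singleton_biUnion, id, sdiff_singleton_eq_erase] at h

/-- The terms of the cut-and-join recursion for factorizations whose first transposition moves `a`: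
the second cycle is joined to that of `a`, or the latter is cut. -/
lemma sum_connectedCountCons (hF : ∀ i ≤ n, HurwitzFormula α i) (hA : ∀ x ∈ A, σ x ∈ A)
    (hn : n + 3 = #A + #(cycleSets A σ)) (ha : a ∈ A) :
    (∑ b ∈ A.erase a, connectedCountCons A σ a b n : ℚ) = 2 ^ n * n.factorial *
      (∑ c ∈ (cycleSets A σ).erase (cycleSet σ a), #c * hurwitzWeight ((#(cycleSet σ a) + #c) ::ₘ
        (((cycleSets A σ).erase (cycleSet σ a)).erase c).val.map card) +
      ∑ r ∈ Ico 1 #(cycleSet σ a), ∑ S ∈ ((cycleSets A σ).erase (cycleSet σ a)).powerset,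
        hurwitzWeight (r ::ₘ S.val.map card) * hurwitzWeight ((#(cycleSet σ a) - r) ::ₘ
          ((cycleSets A σ).erase (cycleSet σ a) \ S).val.map card)) := by
  have hCa : (cycleSets A σ).erase (cycleSet σ a) ⊆ cycleSets A σ := erase_subset _ _
  have hAa := sdiff_cycleSet_eq_biUnion hA ha
  have hca : cycleSet σ a ⊆ A := cycleSet_subset hA ha
  have herase : A.erase a \ (cycleSet σ a).erase a = A \ cycleSet σ a := by
    rw [erase_sdiff_comm, ← sdiff_insert, insert_erase (mem_cycleSet_self σ a)]
  rw [← sum_sdiff (erase_subset_erase a hca), herase, mul_add]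
  congr 1
  · have hsum := sum_cycleSet (apply_mem_biUnion hCa) fun c => hurwitzWeight
      ((#(cycleSet σ a) + #c) ::ₘ (((cycleSets A σ).erase (cycleSet σ a)).erase c).val.map card)
    rw [cycleSets_biUnion hCa, ← hAa] at hsum
    rw [← hsum, mul_sum]
    refine sum_congr rfl fun b hb => ?_
    obtain ⟨hb, hab⟩ := mem_sdiff.1 hb
    exact connectedCountCons_of_not_sameCycle (hF n le_rfl) hA hn ha hb (mt mem_cycleSet.2 hab)
  · rw [← sum_card_cycleSet_swap_mul, mul_sum]
    refine sum_congr rfl fun b hb => ?_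
    obtain ⟨hba, hab⟩ := mem_erase.1 hb
    exact connectedCountCons_of_sameCycle hF hA hn ha (hca hab) hba.symm (mem_cycleSet.1 hab)

lemma hurwitzFormula_zero : HurwitzFormula α 0 := by
  intro A σ hA hσA hn
  have hA_card := hA.card_pos
  have hC_card : 0 < #(cycleSets A σ) := (hA.image _).card_pos
  obtain ⟨x, rfl⟩ := card_eq_one.1 (show #A = 1 by omega)
  have hσx : σ x = x := mem_singleton.1 (hσA x (mem_singleton_self x))
  have hconn : IsConnectedFactorization {x} σ [] :=
    ⟨fun y hy => by simp [mem_singleton.1 hy, swapProd, hσx], fun y hy z hz => by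
      rw [mem_singleton.1 hy, mem_singleton.1 hz]
      exact .refl x⟩
  have hsizes : cycleSizes {x} σ = {1} := by
    simp [cycleSizes, cycleSets, card_cycleSet, Function.minimalPeriod_eq_one_iff_isFixedPt.2 hσx]
  rw [connectedCount, wordSum, if_pos hconn, hsizes]
  simp [hurwitzWeight, treeCoeff]

lemma hurwitzFormula_succ (hF : ∀ i ≤ n, HurwitzFormula α i) : HurwitzFormula α (n + 1) := by
  intro A σ hA hσA hn
  have hweight := hurwitzWeight_cut_and_join (C := cycleSets A σ) card
    (fun c hc => (nonempty_of_mem_cycleSets hc).card_pos) (hA.image _)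
  have hlength : (∑ c ∈ cycleSets A σ, (#c : ℚ) + #(cycleSets A σ) - 2) = n + 1 := by
    rw [← Nat.cast_sum, sum_card_cycleSets hσA, sub_eq_iff_eq_add]
    exact_mod_cast hn.symm
  rw [hlength] at hweight
  have hsum := (sum_cycleSet hσA _).trans hweight.symm
  rw [connectedCount_succ, Nat.cast_sum,
    sum_congr rfl fun a ha => (Nat.cast_sum _ _).trans
      (sum_connectedCountCons hF hσA (by omega) ha), ← mul_sum, hsum,
    cycleSizes, Nat.factorial_succ, pow_succ]
  push_cast
  ring

theorem hurwitzFormula (α : Type*) [DecidableEq α] [Fintype α] (n : ℕ) : HurwitzFormula α n := by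
  induction n using Nat.strong_induction_on with | _ n ih => ?_
  obtain _ | n := n
  · exact hurwitzFormula_zero
  · exact hurwitzFormula_succ fun i hi => ih i (by omega)

end ConnectedCount

section TransitiveFactorization

variable {α : Type*}

lemma equivalence_exists_mem_apply_eq (H : Subgroup (Equiv.Perm α)) :
    Equivalence fun x y => ∃ g ∈ H, g x = y where
  refl _ := ⟨1, H.one_mem, rfl⟩
  symm := fun ⟨g, hg, hgx⟩ => ⟨g⁻¹, H.inv_mem hg, by simp [← hgx]⟩
  trans := fun ⟨g, hg, hgx⟩ ⟨g', hg', hgy⟩ => ⟨g' * g, H.mul_mem hg' hg, by simp [hgx, hgy]⟩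

/-- A tuple of transpositions is a transitive factorization of `σ` if its product is `σ` and it
generates, together with `σ`, a transitive group. -/
def IsTransitiveFactorization [DecidableEq α] {n : ℕ} (σ : Equiv.Perm α)
    (τ : Fin n → Equiv.Perm α) : Prop :=
  (∀ i, (τ i).IsSwap) ∧ (List.ofFn τ).prod = σ ∧
    ∀ x y, ∃ g ∈ Subgroup.closure (Set.range τ ∪ {σ}), g x = y

lemma Joined.apply_of_mem_closure {L : List (α × α)} {S : Set (Equiv.Perm α)}
    (hS : ∀ g ∈ S, ∀ x, Joined L x (g x)) {g : Equiv.Perm α} (hg : g ∈ Subgroup.closure S)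
    (x : α) : Joined L x (g x) := by
  induction hg using Subgroup.closure_induction generalizing x with
  | mem g hg => exact hS g hg x
  | one => exact .refl x
  | mul f g _ _ hf hg => exact (hg x).trans (hf (g x))
  | inv g _ hg => simpa using (hg (g⁻¹ x)).symm

variable [DecidableEq α]

lemma joined_swapProd_iff_exists_mem_closure (L : List (α × α)) (x y : α) :
    Joined L x y ↔ ∃ g ∈ Subgroup.closure
      ({t | t ∈ L.map fun p => Equiv.swap p.1 p.2} ∪ {swapProd L}), g x = y := by
  constructor
  · refine Joined.rel_of_equivalence (equivalence_exists_mem_apply_eq _) fun p hp => ?_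
    exact ⟨Equiv.swap p.1 p.2, Subgroup.subset_closure (.inl (List.mem_map.2 ⟨p, hp, rfl⟩)),
      Equiv.swap_apply_left _ _⟩
  · rintro ⟨g, hg, rfl⟩
    refine Joined.apply_of_mem_closure (fun g hg x => ?_) hg x
    rcases hg with hg | rfl
    · obtain ⟨p, hp, rfl⟩ := List.mem_map.1 hg
      have hx : Joined [p] x (Equiv.swap p.1 p.2 x) := by
        simpa [swapProd] using joined_swapProd [p] x
      exact hx.mono (by simpa using hp)
    · exact joined_swapProd L x

variable [Fintype α]

lemma isConnectedFactorization_univ_iff {σ : Equiv.Perm α} {L : List (α × α)} :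
    IsConnectedFactorization univ σ L ↔ (L.map fun p => Equiv.swap p.1 p.2).prod = σ ∧
      ∀ x y, ∃ g ∈ Subgroup.closure ({t | t ∈ L.map fun p => Equiv.swap p.1 p.2} ∪ {σ}),
        g x = y := by
  simp only [IsConnectedFactorization, mem_univ, true_imp_iff, ← Equiv.Perm.ext_iff]
  refine and_congr_right ?_
  rintro rfl
  exact forall₂_congr (joined_swapProd_iff_exists_mem_closure L)

lemma card_filter_swap_eq_swap {a b : α} (hab : a ≠ b) :
    #{p ∈ (univ : Finset α).offDiag | Equiv.swap p.1 p.2 = Equiv.swap a b} = 2 := by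
  rw [← card_pair (a := (a, b)) (b := (b, a)) (by simp [hab])]
  congr 1
  ext ⟨x, y⟩
  simp only [mem_filter, mem_offDiag, mem_univ, true_and, mem_insert, mem_singleton,
    Prod.mk.injEq]
  constructor
  · rintro ⟨hxy, h⟩
    have hy : y = Equiv.swap a b x := by rw [← h, Equiv.swap_apply_left]
    grind
  · rintro (⟨rfl, rfl⟩ | ⟨rfl, rfl⟩)
    · exact ⟨hab, rfl⟩
    · exact ⟨hab.symm, Equiv.swap_comm _ _⟩

open scoped Classical in
lemma connectedCount_univ (σ : Equiv.Perm α) (n : ℕ) :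
    connectedCount univ σ n =
      2 ^ n * Nat.card {τ : Fin n → Equiv.Perm α // IsTransitiveFactorization σ τ} := by
  have maps_to : ∀ p ∈ (univ : Finset α).offDiag,
      Equiv.swap p.1 p.2 ∈ univ.filter Equiv.Perm.IsSwap := fun p hp =>
    mem_filter.2 ⟨mem_univ _, p.1, p.2, (mem_offDiag.1 hp).2.2, rfl⟩
  have card_fiber : ∀ t ∈ univ.filter Equiv.Perm.IsSwap,
      #{p ∈ (univ : Finset α).offDiag | Equiv.swap p.1 p.2 = t} = 2 := by
    intro t ht
    obtain ⟨a, b, hab, rfl⟩ := (mem_filter.1 ht).2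
    exact card_filter_swap_eq_swap hab
  simp only [connectedCount, isConnectedFactorization_univ_iff]
  rw [wordSum_map maps_to card_fiber n fun l => if l.prod = σ ∧
    ∀ x y, ∃ g ∈ Subgroup.closure ({t | t ∈ l} ∪ {σ}), g x = y then 1 else 0,
    wordSum_eq_sum_piFinset, smul_eq_mul, ← card_filter, Nat.card_eq_fintype_card,
    Fintype.card_subtype]
  congr 2
  ext τ
  have range_eq : {t | t ∈ List.ofFn τ} = Set.range τ := Set.ext fun t => by simp [List.mem_ofFn]
  simp only [mem_filter, Fintype.mem_piFinset, mem_univ, true_and, range_eq]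
  rfl

end TransitiveFactorization

section CycleType

variable {α : Type*} [DecidableEq α] [Fintype α] {σ : Equiv.Perm α} {x : α}

lemma cycleSet_of_apply_eq_self (h : σ x = x) : cycleSet σ x = {x} := by
  rw [cycleSet_eq_image_range one_pos (by simpa using h)]
  rfl

lemma cycleSet_of_apply_ne_self (h : σ x ≠ x) : cycleSet σ x = (σ.cycleOf x).support := by
  ext y
  rw [mem_cycleSet, Equiv.Perm.mem_support_cycleOf_iff' h]

lemma exists_cycleSet_eq_support {f : Equiv.Perm α} (hf : f ∈ σ.cycleFactorsFinset) :
    ∃ x ∈ f.support, f = σ.cycleOf x ∧ cycleSet σ x = f.support := by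
  obtain ⟨x, hx⟩ := (Equiv.Perm.mem_cycleFactorsFinset_iff.1 hf).1.nonempty_support
  have hfx : f = σ.cycleOf x := Equiv.Perm.cycle_is_cycleOf hx hf
  have hσx : σ x ≠ x :=
    Equiv.Perm.mem_support.1 (Equiv.Perm.mem_cycleFactorsFinset_support_le hf hx)
  exact ⟨x, hx, hfx, by rw [cycleSet_of_apply_ne_self hσx, ← hfx]⟩

lemma cycleSets_univ (σ : Equiv.Perm α) :
    cycleSets univ σ =
      σ.cycleFactorsFinset.image Equiv.Perm.support ∪ σ.supportᶜ.image singleton := by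
  ext c
  rw [mem_union, mem_image, mem_image]
  constructor
  · intro hc
    obtain ⟨x, -, rfl⟩ := mem_image.1 hc
    by_cases hx : σ x = x
    · exact .inr ⟨x, by simpa using hx, (cycleSet_of_apply_eq_self hx).symm⟩
    · exact .inl ⟨σ.cycleOf x, Equiv.Perm.cycleOf_mem_cycleFactorsFinset_iff.2
        (Equiv.Perm.mem_support.2 hx), (cycleSet_of_apply_ne_self hx).symm⟩
  · rintro (⟨f, hf, rfl⟩ | ⟨x, hx, rfl⟩)
    · obtain ⟨x, -, -, hx⟩ := exists_cycleSet_eq_support hf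
      exact hx ▸ cycleSet_mem_cycleSets (mem_univ x)
    · rw [mem_compl, Equiv.Perm.notMem_support] at hx
      exact cycleSet_of_apply_eq_self hx ▸ cycleSet_mem_cycleSets (mem_univ x)

lemma injOn_support_cycleFactorsFinset (σ : Equiv.Perm α) :
    Set.InjOn Equiv.Perm.support (σ.cycleFactorsFinset : Set (Equiv.Perm α)) := by
  intro f hf g hg hfg
  obtain ⟨x, hx, hfx, -⟩ := exists_cycleSet_eq_support hf
  exact hfx.trans (Equiv.Perm.cycle_is_cycleOf (hfg ▸ hx) hg).symm

lemma disjoint_image_support_image_singleton (σ : Equiv.Perm α) :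
    Disjoint (σ.cycleFactorsFinset.image Equiv.Perm.support)
      (σ.supportᶜ.image singleton) := by
  simp only [disjoint_left, mem_image]
  rintro _ ⟨f, hf, rfl⟩ ⟨x, -, hx⟩
  have := (Equiv.Perm.mem_cycleFactorsFinset_iff.1 hf).1.two_le_card_support
  rw [← hx, card_singleton] at this
  omega

lemma cycleSizes_univ (σ : Equiv.Perm α) : cycleSizes univ σ = σ.partition.parts := by
  rw [cycleSizes, cycleSets_univ,
    ← disjUnion_eq_union _ _ (disjoint_image_support_image_singleton σ), disjUnion_val,
    Multiset.map_add, image_val_of_injOn (injOn_support_cycleFactorsFinset σ),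
    image_val_of_injOn singleton_injective.injOn, Equiv.Perm.parts_partition,
    Equiv.Perm.cycleType_def, Multiset.map_map, Multiset.map_map]
  simp [card_compl]

lemma prod_factorial_count_add {β : Type*} [DecidableEq β] {s t : Multiset β} (h : Disjoint s t) :
    ∏ n ∈ (s + t).toFinset, ((s + t).count n).factorial =
      (∏ n ∈ s.toFinset, (s.count n).factorial) * ∏ n ∈ t.toFinset, (t.count n).factorial := by
  rw [Multiset.toFinset_add, prod_union (Multiset.disjoint_toFinset.2 h)]
  rw [Multiset.disjoint_left] at h
  congr 1 <;> refine prod_congr rfl fun n hn => ?_ <;> rw [Multiset.mem_toFinset] at hn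
  · rw [Multiset.count_add, Multiset.count_eq_zero_of_notMem (h hn), add_zero]
  · rw [Multiset.count_add, Multiset.count_eq_zero_of_notMem fun hs => h hs hn, zero_add]

lemma card_centralizer (σ : Equiv.Perm α) :
    Nat.card (Subgroup.centralizer {σ}) = σ.partition.parts.prod *
      ∏ n ∈ σ.partition.parts.toFinset, (σ.partition.parts.count n).factorial := by
  have hdisj (r : ℕ) : Disjoint σ.cycleType (Multiset.replicate r 1) := by
    refine Multiset.disjoint_left.2 fun hn h1 => ?_
    have := Equiv.Perm.two_le_of_mem_cycleType hn
    have := Multiset.eq_of_mem_replicate h1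
    omega
  have hones (r : ℕ) : ∏ n ∈ (Multiset.replicate r 1).toFinset,
      ((Multiset.replicate r 1).count n).factorial = r.factorial := by
    rcases eq_or_ne r 0 with rfl | hr
    · rfl
    · simp [Multiset.toFinset_replicate, hr]
  rw [Equiv.Perm.nat_card_centralizer, Equiv.Perm.parts_partition, Equiv.Perm.sum_cycleType,
    prod_factorial_count_add (hdisj _), hones, Multiset.prod_add, Multiset.prod_replicate, one_pow,
    mul_one]
  ring

lemma card_perm_apply_eq {ι κ : Type*} [Fintype ι] [DecidableEq κ] (f : ι → κ) :
    Nat.card {π : Equiv.Perm ι // ∀ i, f (π i) = f i} =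
      ∏ y ∈ (univ.val.map f).toFinset, ((univ.val.map f).count y).factorial := by
  classical
  have hcomp : Nat.card {π : Equiv.Perm ι // ∀ i, f (π i) = f i} =
      Nat.card {π : Equiv.Perm ι // f ∘ π = f} :=
    Nat.card_congr (Equiv.subtypeEquivRight fun _ => funext_iff.symm)
  rw [hcomp, Nat.card_eq_fintype_card, DomMulAct.stabilizer_card']
  refine prod_congr rfl fun y _ => congrArg _ ?_
  rw [Multiset.count_map, Fintype.card_subtype]
  simp only [eq_comm (a := y)]
  rfl

end CycleType

theorem card_transitiveFactorizations {α : Type*} [DecidableEq α] [Fintype α] (σ : Equiv.Perm α)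
    {n : ℕ} (hn : n + 2 = Fintype.card α + σ.partition.parts.card) :
    (Nat.card {τ : Fin n → Equiv.Perm α // IsTransitiveFactorization σ τ} : ℚ) =
      n.factorial * hurwitzWeight σ.partition.parts := by
  have card_cycles : #(cycleSets univ σ) = σ.partition.parts.card := by
    rw [← cycleSizes_univ, cycleSizes, Multiset.card_map, card_val]
  have hα : (univ : Finset α).Nonempty := by
    rw [nonempty_iff_ne_empty]
    intro hα
    simp only [← card_cycles, cycleSets, ← card_univ, hα] at hn
    simp at hn
  have hcount := hurwitzFormula α n univ σ hα (fun _ _ => mem_univ _) (by rw [card_cycles, hn]; rfl)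
  rw [connectedCount_univ, cycleSizes_univ, Nat.cast_mul, Nat.cast_pow, Nat.cast_two,
    mul_assoc] at hcount
  exact mul_left_cancel₀ (by positivity) hcount

end HurwitzNumber

theorem stmt_9_general {α ι : Type*} [Fintype α] [DecidableEq α] [Fintype ι] (σ : Equiv.Perm α)
    (part : ι → ℕ) (hσ : σ.partition.parts = Finset.univ.val.map part) (n : ℕ)
    (hn : n + 2 = Fintype.card α + Fintype.card ι) :
    (Nat.card {τ : Fin n → Equiv.Perm α // (∀ i, (τ i).IsSwap) ∧ (List.ofFn τ).prod = σ ∧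
        ∀ x y : α, ∃ g ∈ Subgroup.closure (Set.range τ ∪ {σ}), g x = y} : ℚ) /
        Nat.card (Subgroup.centralizer {σ}) =
      (Fintype.card α : ℚ) ^ ((Fintype.card ι : ℤ) - 3) * n.factorial *
        (∏ i, (part i : ℚ) ^ part i) / ((∏ i, ((part i).factorial : ℚ)) *
          Nat.card {π : Equiv.Perm ι // ∀ i, part (π i) = part i}) := by
  have card_parts : σ.partition.parts.card = Fintype.card ι := by simp [hσ]
  have sum_part : ∑ i, part i = Fintype.card α := by
    rw [← σ.partition.parts_sum, hσ]
    rfl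
  have hpart : ∏ i, (part i : ℚ) ≠ 0 := by
    refine Finset.prod_ne_zero_iff.2 fun i _ => Nat.cast_ne_zero.2 ?_
    exact (σ.partition.parts_pos (hσ ▸ Multiset.mem_map_of_mem part (Finset.mem_univ i))).ne'
  have hfact := HurwitzNumber.card_transitiveFactorizations σ (hn.trans (by rw [card_parts]))
  have hcent := HurwitzNumber.card_centralizer σ
  rw [hσ, HurwitzNumber.hurwitzWeight_map, ← Nat.cast_sum, sum_part, Finset.prod_mul_distrib,
    Finset.card_univ] at hfact
  rw [hσ, ← HurwitzNumber.card_perm_apply_eq] at hcent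
  simp only [HurwitzNumber.IsTransitiveFactorization, HurwitzNumber.treeCoeff,
    Finset.prod_div_distrib] at hfact
  rw [hfact, hcent, Nat.cast_mul, Finset.prod_map_val, Nat.cast_prod]
  field_simp

/-- Classical Hurwitz formula.  Fix a permutation `σ ∈ S_m` of cycle type
`(m₁,…,m_k)` (a partition of `m ≥ 3` into `k` parts).  The number of `(m+k-2)`-tuples of
transpositions whose product is `σ` and which, together with `σ`, generate a transitive
subgroup, divided by the number of relabelings (elements of the centralizer of `σ`, whose
order is `m₁⋯m_k·s(m₁,…,m_k)`), equals
`m^{k-3}·(m+k-2)!·m₁^{m₁}⋯m_k^{m_k}/(m₁!⋯m_k!·s(m₁,…,m_k))`, where `s` is the number of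
symmetries of the multiset `{m₁,…,m_k}`. -/
theorem stmt_9 (m k : ℕ) (hm : 3 ≤ m) (hk : 1 ≤ k)
    (part : Fin k → ℕ) (hpart : ∀ i, 1 ≤ part i) (hsum : ∑ i, part i = m)
    (σ : Equiv.Perm (Fin m))
    (hσ : (Equiv.Perm.partition σ).parts = Multiset.map part Finset.univ.val)
    (s : ℕ) (hs : s = Nat.card {π : Equiv.Perm (Fin k) // ∀ i, part (π i) = part i}) :
    ((Nat.card {τ : Fin (m + k - 2) → Equiv.Perm (Fin m) //
        (∀ i, (τ i).IsSwap) ∧ (List.ofFn τ).prod = σ ∧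
        ∀ x y : Fin m, ∃ g ∈ Subgroup.closure (Set.range τ ∪ {σ}), g x = y} : ℚ)) /
        (Nat.card (Subgroup.centralizer {σ}) : ℚ)
      = (m : ℚ) ^ ((k : ℤ) - 3) * ((m + k - 2).factorial : ℚ) *
          (∏ i, (part i : ℚ) ^ (part i)) /
          ((∏ i, ((part i).factorial : ℚ)) * (s : ℚ)) := by
  subst hs
  simpa using stmt_9_general σ part hσ (m + k - 2) (by simp only [Fintype.card_fin]; omega)
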